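/- Let b ∈ [0,1) and τ > 0. The neutral KPP-Fisher equation ∂_t(u(t,x) − b·u(t−τ,x)) = ∂_xx(u(t,x) − b·u(t−τ,x)) + u(t,x)·(1 − u(t−τ,x)) admits a monotone traveling front u(t,x) = φ(x+ct) with speed c > 0 if and only if the characteristic function χ₀ has a positive real zero and the characteristic function χ₁ has a negative real zero (i.e., if and only if (τ,c) ∈ 𝔇). -/

import Mathlib

open Filter

/-- Characteristic function χ₀(z) = z² − c·z + 1/(1 − b·e^{−z·c·τ}). -/
noncomputable def chi0 (b c τ z : ℝ) : ℝ :=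
  z ^ 2 - c * z + 1 / (1 - b * Real.exp (-(z * c * τ)))

/-- Characteristic function χ₁(z) = z² − c·z − e^{−z·c·τ}/(1 − b·e^{−z·c·τ}). -/
noncomputable def chi1 (b c τ z : ℝ) : ℝ :=
  z ^ 2 - c * z - Real.exp (-(z * c * τ)) / (1 - b * Real.exp (-(z * c * τ)))

/-- The domain 𝔇: χ₀ has a positive real zero and χ₁ has a negative real zero. -/
def inD (b τ c : ℝ) : Prop :=
  (∃ z > (0 : ℝ), chi0 b c τ z = 0) ∧ (∃ z < (0 : ℝ), chi1 b c τ z = 0)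

/-- A monotone traveling front of the neutral KPP-Fisher equation with speed `c`:
`φ` is nondecreasing, `v(t) = φ(t) − b·φ(t − c·τ)` is twice continuously differentiable,
`v'' − c·v' + φ(t)(1 − φ(t − c·τ)) = 0`, and `φ(−∞) = 0`, `φ(+∞) = 1`. -/
def IsMonotoneFront (b c τ : ℝ) (φ : ℝ → ℝ) : Prop :=
  Monotone φ ∧
  ContDiff ℝ 2 (fun t => φ t - b * φ (t - c * τ)) ∧
  (∀ t : ℝ,
    deriv (deriv (fun r => φ r - b * φ (r - c * τ))) t
      - c * deriv (fun r => φ r - b * φ (r - c * τ)) t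
      + φ t * (1 - φ (t - c * τ)) = 0) ∧
  Tendsto φ atBot (nhds 0) ∧ Tendsto φ atTop (nhds 1)

/-!
Write `h = c τ`, `v(t) = φ(t) - b φ(t - h)` and `p = v'`. Clearing denominators turns the
equations `χ₀(z) = 0` and `χ₁(-r) = 0` into `growthSymbol z = 1` and `decaySymbol r = 1`. Both
symbols vanish at `0`, so membership in `𝔇` says that each is at least `1` at some positive point.

*Necessity.* Near `-∞` the set of `r` with `p ≤ r v` contains `c`. If the growth symbol stayed
below `1`, a Riccati estimate for `p / v` would lower every admissible `r` by a fixed amount,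
contradicting `v > 0` and `p ≥ 0`. Near `+∞`, the set of rates `r` with `φ' ≥ r (1 - φ)` is bounded
because `1 - φ` cannot decay too fast over one delay. If the decay symbol stayed below `1`, the
supremum of these rates could be exceeded.

*Sufficiency.* Multiply the reaction term by `k < 1`, so that both inequalities become strict, and
choose `s > 0` with `decaySymbol s = k`. In terms of `η = φ' + s φ` the equation is a fixed-point
problem for an operator which is monotone exactly because `-s` is a characteristic root at the
upper equilibrium. Exponents `l < m ≤ 2 l` around the last crossing of the growth symbol with `k`
give a supersolution `min (s e^{l t}) s` and a subsolution `max 0 (s e^{l t} - N e^{m t})`, so a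
fixed point exists by the Knaster-Tarski argument. Normalise `φ 0 = 1 / 2` and let `k → 1` by
compactness.
-/

namespace NeutralKPP

open Set Topology
open Real (exp)

/-! ### Differential inequalities -/

theorem le_mul_exp_of_hasDerivAt_le_mul {f f' : ℝ → ℝ} {a x y : ℝ} (hxy : x ≤ y)
    (hf : ∀ t ∈ Icc x y, HasDerivAt f (f' t) t) (hle : ∀ t ∈ Icc x y, f' t ≤ a * f t) :
    f y ≤ f x * exp (a * (y - x)) := by
  have hbound := le_gronwallBound_of_liminf_deriv_right_le (ε := 0)
    (fun t ht => (hf t ht).continuousAt.continuousWithinAt)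
    (fun t ht _ hr =>
      (hf t (Ico_subset_Icc_self ht)).hasDerivWithinAt.liminf_right_slope_le hr)
    le_rfl (fun t ht => (hle t (Ico_subset_Icc_self ht)).trans_eq (add_zero _).symm)
    y (right_mem_Icc.2 hxy)
  rwa [gronwallBound_ε0] at hbound

theorem pos_of_hasDerivAt_le_mul {f f' : ℝ → ℝ} {a x y : ℝ} (hxy : x ≤ y)
    (hf : ∀ t ∈ Icc x y, HasDerivAt f (f' t) t) (hle : ∀ t ∈ Icc x y, f' t ≤ a * f t)
    (hy : 0 < f y) : 0 < f x :=
  pos_of_mul_pos_left (hy.trans_le (le_mul_exp_of_hasDerivAt_le_mul hxy hf hle))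
    (Real.exp_pos _).le

theorem nonneg_of_hasDerivAt_le_mul {f f' : ℝ → ℝ} {a x y : ℝ} (hxy : x ≤ y)
    (hf : ∀ t ∈ Icc x y, HasDerivAt f (f' t) t) (hle : ∀ t ∈ Icc x y, f' t ≤ a * f t)
    (hy : 0 ≤ f y) : 0 ≤ f x :=
  nonneg_of_mul_nonneg_left (hy.trans (le_mul_exp_of_hasDerivAt_le_mul hxy hf hle))
    (Real.exp_pos _)

theorem nonpos_of_mul_le_hasDerivAt {f f' : ℝ → ℝ} {a C T : ℝ} (ha : 0 < a)
    (hf : ∀ t ≥ T, HasDerivAt f (f' t) t) (hle : ∀ t ≥ T, a * f t ≤ f' t)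
    (hC : ∀ᶠ t in atTop, f t ≤ C) {t : ℝ} (ht : T ≤ t) : f t ≤ 0 := by
  by_contra! hpos
  have hgrowth : ∀ s ≥ t, f t * exp (a * (s - t)) ≤ f s := fun s hs => by
    have := le_mul_exp_of_hasDerivAt_le_mul (f := fun r => -f r) (a := a) hs
      (fun r hr => (hf r (ht.trans hr.1)).neg)
      (fun r hr => by linarith [hle r (ht.trans hr.1)])
    linarith
  have hunbounded : Tendsto (fun s => f t * exp (a * (s - t))) atTop atTop :=
    (Real.tendsto_exp_atTop.comp
      ((tendsto_atTop_add_const_right _ (-t) tendsto_id).const_mul_atTop ha)).const_mul_atTop hpos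
  obtain ⟨s, hs, hle, hlt⟩ :=
    ((eventually_ge_atTop t).and (hC.and (hunbounded.eventually_gt_atTop C))).exists
  linarith [hgrowth s hs]

theorem mul_one_sub_exp_div_le_of_hasDerivAt_le {f f' : ℝ → ℝ} {a c s e : ℝ} (hc : 0 < c)
    (hse : s ≤ e) (hf : ∀ t ∈ Icc s e, HasDerivAt f (f' t) t)
    (hle : ∀ t ∈ Icc s e, f' t ≤ c * f t - a) (hfe : 0 ≤ f e) :
    a * ((1 - exp (c * (s - e))) / c) ≤ f s := by
  have hcancel : c * (a / c) = a := by field_simp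
  have hgrow := le_mul_exp_of_hasDerivAt_le_mul (f := fun t => f t - a / c) (a := c) hse
    (fun t ht => (hf t ht).sub_const _) (fun t ht => by rw [mul_sub, hcancel]; exact hle t ht)
  have hexp : exp (c * (e - s)) * exp (c * (s - e)) = 1 := by
    rw [← Real.exp_add, ← mul_add, sub_add_sub_cancel, sub_self, mul_zero, Real.exp_zero]
  have hscaled := mul_le_mul_of_nonneg_right hgrow (Real.exp_pos (c * (s - e))).le
  rw [mul_assoc, hexp, mul_one] at hscaled
  have := mul_nonneg hfe (Real.exp_pos (c * (s - e))).le
  have hsplit : a * ((1 - exp (c * (s - e))) / c) = a / c - a / c * exp (c * (s - e)) := by ring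
  linarith

/-- The factor of `a` is the value at `s` of the solution of `ψ'' - c ψ' = 1` that vanishes to
first order at `e`. -/
theorem mul_le_of_le_hasDerivAt_sub_mul {x x' x'' : ℝ → ℝ} {a c s e : ℝ} (hc : 0 < c)
    (hse : s ≤ e) (hx : ∀ t ∈ Icc s e, HasDerivAt x (x' t) t)
    (hx' : ∀ t ∈ Icc s e, HasDerivAt x' (x'' t) t) (hle : ∀ t ∈ Icc s e, a ≤ x'' t - c * x' t)
    (hxe : 0 ≤ x e) (hxe' : x' e ≤ 0) :
    a * ((exp (c * (s - e)) - 1 - c * (s - e)) / c ^ 2) ≤ x s := by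
  let ψ : ℝ → ℝ := fun t => (exp (c * (t - e)) - 1 - c * (t - e)) / c ^ 2
  have hψ (t : ℝ) : HasDerivAt ψ ((exp (c * (t - e)) - 1) / c) t := by
    have hlin : HasDerivAt (fun t => c * (t - e)) c t := by
      simpa using ((hasDerivAt_id t).sub_const e).const_mul c
    refine (((hlin.exp.sub_const 1).sub hlin).div_const (c ^ 2)).congr_deriv ?_
    field_simp
  have hanti : AntitoneOn (fun t => x t - a * ψ t) (Icc s e) := by
    have hderiv (t) (ht : t ∈ Icc s e) := (hx t ht).sub ((hψ t).const_mul a)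
    refine antitoneOn_of_hasDerivWithinAt_nonpos (convex_Icc s e)
      (fun t ht => (hderiv t ht).continuousAt.continuousWithinAt)
      (fun t ht => (hderiv t (interior_subset ht)).hasDerivWithinAt) fun t ht => ?_
    have hsub : Icc t e ⊆ Icc s e := Icc_subset_Icc_left (interior_subset ht).1
    have hslope := mul_one_sub_exp_div_le_of_hasDerivAt_le (f := fun t => -x' t) (a := a) hc
      (interior_subset ht).2 (fun r hr => (hx' r (hsub hr)).neg)
      (fun r hr => by linarith [hle r (hsub hr)]) (neg_nonneg.2 hxe')
    have hneg : a * ((exp (c * (t - e)) - 1) / c) = -(a * ((1 - exp (c * (t - e))) / c)) := by ring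
    linarith
  have hcompare := hanti (left_mem_Icc.2 hse) (right_mem_Icc.2 hse) hse
  have hψe : ψ e = 0 := by simp [ψ]
  simp only [hψe, mul_zero, sub_zero] at hcompare
  linarith

/-! ### Limits of derivatives at infinity -/

theorem tendsto_sub_const_of_eq {l : Filter ℝ} (hl : l = atTop ∨ l = atBot) (a : ℝ) :
    Tendsto (fun t => t - a) l l := by
  rcases hl with rfl | rfl
  · simpa only [sub_eq_add_neg, id] using tendsto_atTop_add_const_right atTop (-a) tendsto_id
  · simpa only [sub_eq_add_neg, id] using tendsto_atBot_add_const_right atBot (-a) tendsto_id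

theorem neBot_of_eq {l : Filter ℝ} (hl : l = atTop ∨ l = atBot) : l.NeBot := by
  rcases hl with rfl | rfl <;> infer_instance

theorem exists_tendsto_deriv_comp {l : Filter ℝ} (hl : l = atTop ∨ l = atBot) {f f' : ℝ → ℝ}
    {a : ℝ} (hf : ∀ t, HasDerivAt f (f' t) t) (hlim : Tendsto f l (𝓝 a)) :
    ∃ ξ : ℝ → ℝ, Tendsto ξ l l ∧ Tendsto (f' ∘ ξ) l (𝓝 0) := by
  have hmean (t : ℝ) : ∃ s ∈ Ioo (t - 1) t, f' s = f t - f (t - 1) := by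
    obtain ⟨s, hs, hslope⟩ := exists_hasDerivAt_eq_slope f f' (sub_one_lt t)
      (fun x _ => (hf x).continuousAt.continuousWithinAt) (fun x _ => hf x)
    exact ⟨s, hs, by rw [hslope]; simp⟩
  choose ξ hξ hslope using hmean
  have hshift := tendsto_sub_const_of_eq hl 1
  refine ⟨ξ, ?_, ?_⟩
  · rcases hl with rfl | rfl
    · exact tendsto_atTop_mono (fun t => (hξ t).1.le) hshift
    · exact tendsto_atBot_mono (fun t => (hξ t).2.le) tendsto_id
  · simpa only [Function.comp_def, hslope, sub_self] using hlim.sub (hlim.comp hshift)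

theorem eq_zero_of_tendsto_deriv {l : Filter ℝ} (hl : l = atTop ∨ l = atBot) {f f' : ℝ → ℝ}
    {a a' : ℝ} (hf : ∀ t, HasDerivAt f (f' t) t) (hlim : Tendsto f l (𝓝 a))
    (hlim' : Tendsto f' l (𝓝 a')) : a' = 0 := by
  have := neBot_of_eq hl
  obtain ⟨ξ, hξ, hzero⟩ := exists_tendsto_deriv_comp hl hf hlim
  exact tendsto_nhds_unique (hlim'.comp hξ) hzero

theorem tendsto_deriv_zero_of_antitone {l : Filter ℝ} (hl : l = atTop ∨ l = atBot)
    {f f' : ℝ → ℝ} {a c : ℝ} (hf : ∀ t, HasDerivAt f (f' t) t) (hlim : Tendsto f l (𝓝 a))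
    (hanti : Antitone fun t => f' t - c * f t) : Tendsto f' l (𝓝 0) := by
  have := neBot_of_eq hl
  obtain ⟨ξ, hξ, hzero⟩ := exists_tendsto_deriv_comp hl hf hlim
  have hsubseq : Tendsto ((fun t => f' t - c * f t) ∘ ξ) l (𝓝 (0 - c * a)) :=
    hzero.sub ((hlim.comp hξ).const_mul c)
  obtain ⟨L, hL⟩ : ∃ L, Tendsto (fun t => f' t - c * f t) l (𝓝 L) := by
    rcases hl with rfl | rfl
    · exact (tendsto_atTop_of_antitone hanti).resolve_left fun hinf =>
        not_tendsto_nhds_of_tendsto_atBot (hinf.comp hξ) _ hsubseq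
    · exact (tendsto_atBot_of_antitone hanti).resolve_left fun hinf =>
        not_tendsto_nhds_of_tendsto_atTop (hinf.comp hξ) _ hsubseq
  have hderiv : Tendsto f' l (𝓝 (L + c * a)) := by
    simpa only [sub_add_cancel] using hL.add (hlim.const_mul c)
  rwa [eq_zero_of_tendsto_deriv hl hf hlim hderiv] at hderiv

theorem not_bddAbove_of_add_mem {S : Set ℝ} (hS : S.Nonempty)
    (hadd : ∀ R, IsLUB S R → ∃ η > 0, ∀ r ∈ S, R - η < r → r + η ∈ S) : ¬BddAbove S := by
  intro hbdd
  have hlub := isLUB_csSup hS hbdd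
  obtain ⟨η, hη, hstep⟩ := hadd _ hlub
  obtain ⟨r, hr, hlt⟩ := exists_lt_of_lt_csSup hS (sub_lt_self _ hη)
  linarith [hlub.1 (hstep r hr hlt)]

/-! ### Characteristic symbols -/

/-- The characteristic function `χ₀` at `z`, with its denominator cleared and `h = c τ`:
for `z > 0` the equation `χ₀(z) = 0` becomes `growthSymbol b c h z = 1`. -/
noncomputable def growthSymbol (b c h z : ℝ) : ℝ :=
  (c * z - z ^ 2) * (1 - b * exp (-(z * h)))

/-- The characteristic function `χ₁` at `-r`, with its denominator cleared and `h = c τ`: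
for `r > 0` the equation `χ₁(-r) = 0` becomes `decaySymbol b c h r = 1`. -/
noncomputable def decaySymbol (b c h r : ℝ) : ℝ :=
  (r ^ 2 + c * r) * (exp (-(r * h)) - b)

theorem growthSymbol_zero (b c h : ℝ) : growthSymbol b c h 0 = 0 := by simp [growthSymbol]

theorem decaySymbol_zero (b c h : ℝ) : decaySymbol b c h 0 = 0 := by simp [decaySymbol]

theorem continuous_growthSymbol (b c h : ℝ) : Continuous (growthSymbol b c h) := by
  unfold growthSymbol
  fun_prop

theorem continuous_decaySymbol (b c h : ℝ) : Continuous (decaySymbol b c h) := by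
  unfold decaySymbol
  fun_prop

theorem one_sub_mul_exp_neg_pos {b x : ℝ} (hb0 : 0 ≤ b) (hb1 : b < 1) (hx : 0 ≤ x) :
    0 < 1 - b * exp (-x) := by
  have := mul_le_of_le_one_right hb0 (Real.exp_le_one_iff.2 (neg_nonpos.2 hx))
  linarith

theorem chi0_eq_zero_iff {b c τ z : ℝ} (hb0 : 0 ≤ b) (hb1 : b < 1) (hz : 0 ≤ z * (c * τ)) :
    chi0 b c τ z = 0 ↔ growthSymbol b c (c * τ) z = 1 := by
  have hden := (one_sub_mul_exp_neg_pos hb0 hb1 hz).ne'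
  rw [chi0, growthSymbol, mul_assoc z c τ, ← eq_div_iff hden]
  constructor <;> intro <;> linarith

theorem chi1_neg_eq_zero_iff {b c τ r : ℝ} (hr : r ^ 2 + c * r ≠ 0) :
    chi1 b c τ (-r) = 0 ↔ decaySymbol b c (c * τ) r = 1 := by
  have hexp : exp (-(-r * c * τ)) = (exp (-(r * (c * τ))))⁻¹ := by
    rw [← Real.exp_neg]
    congr 1
    ring
  have hfrac : chi1 b c τ (-r) = r ^ 2 + c * r - 1 / (exp (-(r * (c * τ))) - b) := by
    have hpos := Real.exp_pos (-(r * (c * τ)))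
    rw [chi1, hexp, ← div_eq_mul_inv b, one_sub_div hpos.ne', inv_div_left]
    field_simp
    ring
  rw [hfrac, decaySymbol, sub_eq_zero]
  rcases eq_or_ne (exp (-(r * (c * τ))) - b) 0 with hden | hden
  · simp [hden, hr]
  · rw [eq_div_iff hden]

theorem inD_iff {b c τ : ℝ} (hb0 : 0 ≤ b) (hb1 : b < 1) (hc : 0 < c) (hτ : 0 < τ) :
    inD b τ c ↔ (∃ z > 0, 1 ≤ growthSymbol b c (c * τ) z) ∧
      ∃ r > 0, 1 ≤ decaySymbol b c (c * τ) r := by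
  have hchi0 {z : ℝ} (hz : 0 < z) : chi0 b c τ z = 0 ↔ growthSymbol b c (c * τ) z = 1 :=
    chi0_eq_zero_iff hb0 hb1 (by positivity)
  have hchi1 {r : ℝ} (hr : 0 < r) : chi1 b c τ (-r) = 0 ↔ decaySymbol b c (c * τ) r = 1 :=
    chi1_neg_eq_zero_iff (by positivity)
  refine and_congr ⟨?_, ?_⟩ ⟨?_, ?_⟩
  · rintro ⟨z, hz, hzero⟩
    exact ⟨z, hz, ((hchi0 hz).1 hzero).ge⟩
  · rintro ⟨z, hz, hle⟩
    obtain ⟨x, hx, hone⟩ := intermediate_value_Ioc hz.le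
      (continuous_growthSymbol b c (c * τ)).continuousOn
      ⟨(growthSymbol_zero b c (c * τ)).trans_lt one_pos, hle⟩
    exact ⟨x, hx.1, (hchi0 hx.1).2 hone⟩
  · rintro ⟨z, hz, hzero⟩
    exact ⟨-z, neg_pos.2 hz, ((hchi1 (neg_pos.2 hz)).1 (by rwa [neg_neg])).ge⟩
  · rintro ⟨r, hr, hle⟩
    obtain ⟨x, hx, hone⟩ := intermediate_value_Ioc hr.le
      (continuous_decaySymbol b c (c * τ)).continuousOn
      ⟨(decaySymbol_zero b c (c * τ)).trans_lt one_pos, hle⟩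
    exact ⟨-x, neg_neg_of_pos hx.1, (hchi1 hx.1).2 hone⟩

/-! ### Profiles -/

/-- The neutral difference `v(t) = φ(t) - b φ(t - h)`. -/
def neutralPart (b h : ℝ) (φ : ℝ → ℝ) (t : ℝ) : ℝ := φ t - b * φ (t - h)

/-- The reaction term `φ(t) (1 - φ(t - h))`. -/
def delayedLogistic (h : ℝ) (φ : ℝ → ℝ) (t : ℝ) : ℝ := φ t * (1 - φ (t - h))

/-- `φ` is a nondecreasing `[0, 1]`-valued solution of `v'' - c v' + k φ(t) (1 - φ(t - h)) = 0`,
where `v` is the neutral part of `φ`, and `p = v'`. Fronts have `k = 1`; for `k < 1` the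
characteristic inequalities are strict, which is what the construction of profiles uses. -/
structure IsProfile (b c h k : ℝ) (φ p : ℝ → ℝ) : Prop where
  mono : Monotone φ
  nonneg : ∀ t, 0 ≤ φ t
  le_one : ∀ t, φ t ≤ 1
  hasDerivAt_neutralPart : ∀ t, HasDerivAt (neutralPart b h φ) (p t) t
  hasDerivAt_deriv : ∀ t, HasDerivAt p (c * p t - k * delayedLogistic h φ t) t

section Limits

variable {l : Filter ℝ} {φ : ℝ → ℝ} {a : ℝ}

theorem tendsto_neutralPart (hl : l = atTop ∨ l = atBot) (hlim : Tendsto φ l (𝓝 a)) (b h : ℝ) :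
    Tendsto (neutralPart b h φ) l (𝓝 ((1 - b) * a)) := by
  rw [one_sub_mul]
  exact hlim.sub ((hlim.comp (tendsto_sub_const_of_eq hl h)).const_mul b)

theorem tendsto_delayedLogistic (hl : l = atTop ∨ l = atBot) (hlim : Tendsto φ l (𝓝 a)) (h : ℝ) :
    Tendsto (delayedLogistic h φ) l (𝓝 (a * (1 - a))) :=
  hlim.mul ((hlim.comp (tendsto_sub_const_of_eq hl h)).const_sub 1)

end Limits

namespace IsProfile

variable {b c h k : ℝ} {φ p : ℝ → ℝ}

theorem delayedLogistic_nonneg (hφ : IsProfile b c h k φ p) (t : ℝ) :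
    0 ≤ delayedLogistic h φ t :=
  mul_nonneg (hφ.nonneg t) (sub_nonneg.2 (hφ.le_one (t - h)))

theorem delayedLogistic_le_one (hφ : IsProfile b c h k φ p) (t : ℝ) :
    delayedLogistic h φ t ≤ 1 :=
  mul_le_one₀ (hφ.le_one t) (sub_nonneg.2 (hφ.le_one (t - h))) (sub_le_self 1 (hφ.nonneg (t - h)))

theorem comp_add (hφ : IsProfile b c h k φ p) (s : ℝ) :
    IsProfile b c h k (fun t => φ (t + s)) (fun t => p (t + s)) where
  mono _ _ hle := hφ.mono (add_le_add_left hle s)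
  nonneg t := hφ.nonneg (t + s)
  le_one t := hφ.le_one (t + s)
  hasDerivAt_neutralPart t := by
    have hshift : neutralPart b h (fun t => φ (t + s)) = fun t => neutralPart b h φ (t + s) := by
      funext r
      simp only [neutralPart, sub_add_eq_add_sub]
    rw [hshift]
    exact (hφ.hasDerivAt_neutralPart (t + s)).comp_add_const t s
  hasDerivAt_deriv t := by
    simpa only [delayedLogistic, sub_add_eq_add_sub] using
      (hφ.hasDerivAt_deriv (t + s)).comp_add_const t s

theorem antitone_deriv_sub (hφ : IsProfile b c h k φ p) (hk : 0 ≤ k) :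
    Antitone fun t => p t - c * neutralPart b h φ t := by
  refine antitone_of_hasDerivAt_nonpos
    (fun t => (hφ.hasDerivAt_deriv t).sub ((hφ.hasDerivAt_neutralPart t).const_mul c)) fun t => ?_
  have := mul_nonneg hk (hφ.delayedLogistic_nonneg t)
  simpa using this

theorem tendsto_deriv_zero (hφ : IsProfile b c h k φ p) (hk : 0 ≤ k) {l : Filter ℝ}
    (hl : l = atTop ∨ l = atBot) {a : ℝ} (hlim : Tendsto φ l (𝓝 a)) : Tendsto p l (𝓝 0) :=
  tendsto_deriv_zero_of_antitone hl hφ.hasDerivAt_neutralPart (tendsto_neutralPart hl hlim b h)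
    (hφ.antitone_deriv_sub hk)

theorem limit_eq_zero_or_one (hφ : IsProfile b c h k φ p) (hk : 0 < k) {l : Filter ℝ}
    (hl : l = atTop ∨ l = atBot) {a : ℝ} (hlim : Tendsto φ l (𝓝 a)) : a = 0 ∨ a = 1 := by
  have hp := hφ.tendsto_deriv_zero hk.le hl hlim
  have hzero := eq_zero_of_tendsto_deriv hl hφ.hasDerivAt_deriv hp
    ((hp.const_mul c).sub ((tendsto_delayedLogistic hl hlim h).const_mul k))
  have hproduct : k * (a * (1 - a)) = 0 := by linarith
  rcases mul_eq_zero.1 ((mul_eq_zero.1 hproduct).resolve_left hk.ne') with ha | ha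
  · exact Or.inl ha
  · exact Or.inr (by linarith)

theorem exists_tendsto_atTop (hφ : IsProfile b c h k φ p) : ∃ a, Tendsto φ atTop (𝓝 a) :=
  ⟨_, tendsto_atTop_ciSup hφ.mono ⟨1, forall_mem_range.2 hφ.le_one⟩⟩

theorem exists_tendsto_atBot (hφ : IsProfile b c h k φ p) : ∃ a, Tendsto φ atBot (𝓝 a) :=
  ⟨_, tendsto_atBot_ciInf hφ.mono ⟨0, forall_mem_range.2 hφ.nonneg⟩⟩

theorem tendsto_zero_and_one (hφ : IsProfile b c h k φ p) (hk : 0 < k) {s : ℝ} (hpos : 0 < φ s)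
    (hlt : φ s < 1) : Tendsto φ atBot (𝓝 0) ∧ Tendsto φ atTop (𝓝 1) := by
  obtain ⟨a, ha⟩ := hφ.exists_tendsto_atBot
  obtain ⟨a', ha'⟩ := hφ.exists_tendsto_atTop
  have hle := hφ.mono.le_of_tendsto ha s
  have hge := hφ.mono.ge_of_tendsto ha' s
  have hzero : a = 0 := (hφ.limit_eq_zero_or_one hk (Or.inr rfl) ha).resolve_right (by linarith)
  have hone : a' = 1 := (hφ.limit_eq_zero_or_one hk (Or.inl rfl) ha').resolve_left (by linarith)
  exact ⟨hzero ▸ ha, hone ▸ ha'⟩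

theorem deriv_nonneg (hφ : IsProfile b c h k φ p) (hk : 0 ≤ k) (hc : 0 < c) (t : ℝ) :
    0 ≤ p t := by
  obtain ⟨a, ha⟩ := hφ.exists_tendsto_atTop
  have hneg := (hφ.tendsto_deriv_zero hk (Or.inl rfl) ha).neg
  refine neg_nonpos.1 (nonpos_of_mul_le_hasDerivAt (f := fun s => -p s) (T := t) hc
    (fun s _ => (hφ.hasDerivAt_deriv s).neg) (fun s _ => ?_)
    (hneg.eventually_le_const (neg_zero.trans_lt one_pos)) le_rfl)
  have := mul_nonneg hk (hφ.delayedLogistic_nonneg s)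
  linarith

theorem deriv_le_mul_neutralPart (hφ : IsProfile b c h k φ p) (hb1 : b ≤ 1) (hk : 0 ≤ k)
    (hc : 0 ≤ c) (t : ℝ) : p t ≤ c * neutralPart b h φ t := by
  obtain ⟨a, ha⟩ := hφ.exists_tendsto_atBot
  have hlim := (hφ.tendsto_deriv_zero hk (Or.inr rfl) ha).sub
    ((tendsto_neutralPart (Or.inr rfl) ha b h).const_mul c)
  have hle := (hφ.antitone_deriv_sub hk).ge_of_tendsto hlim t
  have ha0 : 0 ≤ a := ge_of_tendsto' ha hφ.nonneg
  have := mul_nonneg hc (mul_nonneg (sub_nonneg.2 hb1) ha0)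
  linarith

theorem one_sub_mul_le_neutralPart (hφ : IsProfile b c h k φ p) (hb0 : 0 ≤ b) (hh : 0 ≤ h)
    (t : ℝ) : (1 - b) * φ t ≤ neutralPart b h φ t := by
  have := mul_le_mul_of_nonneg_left (hφ.mono (sub_le_self t hh)) hb0
  rw [neutralPart]
  linarith

theorem neutralPart_le_one (hφ : IsProfile b c h k φ p) (hb0 : 0 ≤ b) (t : ℝ) :
    neutralPart b h φ t ≤ 1 :=
  (sub_le_self _ (mul_nonneg hb0 (hφ.nonneg (t - h)))).trans (hφ.le_one t)

theorem deriv_le (hφ : IsProfile b c h k φ p) (hb0 : 0 ≤ b) (hb1 : b ≤ 1) (hk : 0 ≤ k)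
    (hc : 0 < c) (t : ℝ) : p t ≤ c :=
  (hφ.deriv_le_mul_neutralPart hb1 hk hc.le t).trans
    (mul_le_of_le_one_right hc.le (hφ.neutralPart_le_one hb0 t))

theorem neutralPart_pos (hφ : IsProfile b c h k φ p) (hb0 : 0 ≤ b) (hb1 : b < 1) (hh : 0 ≤ h)
    (hk : 0 ≤ k) (hc : 0 < c) (htop : Tendsto φ atTop (𝓝 1)) (t : ℝ) :
    0 < neutralPart b h φ t := by
  obtain ⟨s, hs, hts⟩ :=
    ((htop.eventually_const_lt one_pos).and (eventually_ge_atTop t)).exists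
  exact pos_of_hasDerivAt_le_mul hts (fun x _ => hφ.hasDerivAt_neutralPart x)
    (fun x _ => hφ.deriv_le_mul_neutralPart hb1.le hk hc.le x)
    ((mul_pos (sub_pos.2 hb1) hs).trans_le (hφ.one_sub_mul_le_neutralPart hb0 hh s))

end IsProfile

/-! ### Growth at `-∞` -/

theorem nonneg_of_neutralPart_nonneg {D : ℝ → ℝ} {b h C T : ℝ} (hb0 : 0 ≤ b) (hb1 : b < 1)
    (hh : 0 ≤ h) (hC : ∀ t ≤ T, -C ≤ D t) (hD : ∀ t ≤ T, 0 ≤ neutralPart b h D t) {t : ℝ}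
    (ht : t ≤ T) : 0 ≤ D t := by
  have hpow (n : ℕ) : ∀ t ≤ T, -(b ^ n * C) ≤ D t := by
    induction n with
    | zero => simpa using hC
    | succ n ih =>
      intro t ht
      have hshift := mul_le_mul_of_nonneg_left (ih (t - h) ((sub_le_self t hh).trans ht)) hb0
      have := hD t ht
      rw [neutralPart] at this
      rw [pow_succ']
      linarith
  have hlim : Tendsto (fun n : ℕ => -(b ^ n * C)) atTop (𝓝 0) := by
    simpa using ((tendsto_pow_atTop_nhds_zero_of_lt_one hb0 hb1).mul_const C).neg
  exact le_of_tendsto' hlim fun n => hpow n t ht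

section Riccati

variable {v p R : ℝ → ℝ} {c r Q η T : ℝ}

theorem mul_lt_deriv_of_le (hv : ∀ t ≤ T, HasDerivAt v (p t) t)
    (hp : ∀ t ≤ T, HasDerivAt p (c * p t - R t) t) (hpos : ∀ t ≤ T, 0 ≤ v t)
    (hR : ∀ t ≤ T, Q * v t ≤ R t) {q : ℝ} (hQ : 0 ≤ q ^ 2 - c * q + Q) {s t : ℝ} (hst : s ≤ t)
    (ht : t ≤ T) (hlt : q * v t < p t) : q * v s < p s := by
  refine sub_pos.1 (pos_of_hasDerivAt_le_mul (f := fun x => p x - q * v x) (a := c - q) hst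
    (fun x hx => (hp x (hx.2.trans ht)).sub ((hv x (hx.2.trans ht)).const_mul q))
    (fun x hx => ?_) (sub_pos.2 hlt))
  have := hR x (hx.2.trans ht)
  have := mul_nonneg hQ (hpos x (hx.2.trans ht))
  linarith

theorem add_nonpos_of_riccati {c η p Q r R v : ℝ} (hc : 0 ≤ c) (hv : 0 < v)
    (hlow : (r - η) * v ≤ p) (hhigh : p ≤ r * v) (hR : Q * v ≤ R) (hrc : r ≤ c)
    (hQ : 2 * c * η ≤ r ^ 2 - c * r + Q) :
    ((c * p - R) * v - p * p) / v ^ 2 + c * η ≤ 0 := by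
  have hriccati : ((c * p - R) * v - p * p) / v ^ 2 = c * (p / v) - R / v - (p / v) ^ 2 := by
    field_simp
  have hratio_ge : r - η ≤ p / v := (le_div_iff₀ hv).2 hlow
  have hratio_le : p / v ≤ r := (div_le_iff₀ hv).2 hhigh
  have hreact : Q ≤ R / v := (le_div_iff₀ hv).2 hR
  rw [hriccati]
  nlinarith [mul_nonneg (sub_nonneg.2 hratio_le) (sub_nonneg.2 hrc),
    mul_nonneg hc (sub_nonneg.2 hratio_ge)]

/-- While `r - η < p / v ≤ r`, the Riccati equation makes `p / v` grow at rate at least `c η`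
backwards in time, so that it would exceed `r` within time `1 / c`. -/
theorem deriv_le_sub_mul_of_le (hc : 0 < c) (hη : 0 ≤ η)
    (hv : ∀ t ≤ T, HasDerivAt v (p t) t) (hp : ∀ t ≤ T, HasDerivAt p (c * p t - R t) t)
    (hpos : ∀ t ≤ T, 0 < v t) (hR : ∀ t ≤ T, Q * v t ≤ R t) (hr : ∀ t ≤ T, p t ≤ r * v t)
    (hrc : r ≤ c) (hQ : 2 * c * η ≤ r ^ 2 - c * r + Q) {t : ℝ} (ht : t ≤ T) :
    p t ≤ (r - η) * v t := by
  by_contra! hlt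
  have hQ' : 0 ≤ (r - η) ^ 2 - c * (r - η) + Q := by nlinarith
  have hback (x : ℝ) (hx : x ≤ t) : (r - η) * v x < p x :=
    mul_lt_deriv_of_le hv hp (fun s hs => (hpos s hs).le) hR hQ' hx ht hlt
  have hratio (x : ℝ) (hx : x ≤ t) : HasDerivAt (fun s => p s / v s + c * η * s)
      (((c * p x - R x) * v x - p x * p x) / v x ^ 2 + c * η) x :=
    (((hp x (hx.trans ht)).div (hv x (hx.trans ht)) (hpos x (hx.trans ht)).ne').add
      ((hasDerivAt_id x).const_mul (c * η))).congr_deriv (by rw [mul_one])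
  have hslope (x : ℝ) (hx : x ≤ t) :
      ((c * p x - R x) * v x - p x * p x) / v x ^ 2 + c * η ≤ 0 :=
    add_nonpos_of_riccati hc.le (hpos x (hx.trans ht)) (hback x hx).le
      (hr x (hx.trans ht)) (hR x (hx.trans ht)) hrc hQ
  have hanti : AntitoneOn (fun s => p s / v s + c * η * s) (Iic t) :=
    antitoneOn_of_hasDerivWithinAt_nonpos (convex_Iic t)
      (fun x hx => (hratio x hx).continuousAt.continuousWithinAt)
      (fun x hx => (hratio x (interior_subset (s := Iic t) hx)).hasDerivWithinAt)
      (fun x hx => hslope x (interior_subset (s := Iic t) hx))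
  have hpast : t - 1 / c ≤ t := sub_le_self t (by positivity)
  have hcompare := hanti (mem_Iic.2 hpast) self_mem_Iic hpast
  have hnow : r - η < p t / v t := (lt_div_iff₀ (hpos t ht)).2 hlt
  have hthen : p (t - 1 / c) / v (t - 1 / c) ≤ r :=
    (div_le_iff₀ (hpos _ (hpast.trans ht))).2 (hr _ (hpast.trans ht))
  have hdrop : c * η * (t - 1 / c) = c * η * t - η := by field_simp
  dsimp only at hcompare
  linarith

end Riccati

namespace IsProfile

variable {b c h k : ℝ} {φ p : ℝ → ℝ}

theorem exp_mul_le_shift (hφ : IsProfile b c h k φ p) (hb0 : 0 ≤ b) (hb1 : b < 1) (hh : 0 ≤ h)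
    {r T : ℝ} (hr : ∀ t ≤ T, p t ≤ r * neutralPart b h φ t) {t : ℝ} (ht : t ≤ T) :
    exp (-(r * h)) * φ t ≤ φ (t - h) := by
  refine sub_nonneg.1 (nonneg_of_neutralPart_nonneg (C := exp (-(r * h)))
    (D := fun t => φ (t - h) - exp (-(r * h)) * φ t) hb0 hb1 hh (fun t _ => ?_) (fun t ht => ?_) ht)
  · have := mul_le_of_le_one_right (Real.exp_pos (-(r * h))).le (hφ.le_one t)
    linarith [hφ.nonneg (t - h)]
  · have hgrowth := le_mul_exp_of_hasDerivAt_le_mul (sub_le_self t hh)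
      (fun x _ => hφ.hasDerivAt_neutralPart x) (fun x hx => hr x (hx.2.trans ht))
    rw [sub_sub_cancel] at hgrowth
    have hscaled := mul_le_mul_of_nonneg_left hgrowth (Real.exp_pos (-(r * h))).le
    have hcancel : exp (-(r * h)) * (neutralPart b h φ (t - h) * exp (r * h))
        = neutralPart b h φ (t - h) := by
      rw [mul_left_comm, ← Real.exp_add, neg_add_cancel, Real.exp_zero, mul_one]
    rw [hcancel] at hscaled
    simp only [neutralPart] at hscaled ⊢
    linarith

theorem mul_neutralPart_le_delayedLogistic (hφ : IsProfile b c h k φ p) (hb0 : 0 ≤ b)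
    (hb1 : b < 1) (hh : 0 ≤ h) {r ε T : ℝ} (hr0 : 0 ≤ r) (hε : ε ≤ 1)
    (hr : ∀ t ≤ T, p t ≤ r * neutralPart b h φ t) {t : ℝ} (ht : t ≤ T) (hsmall : φ (t - h) ≤ ε) :
    (1 - ε) * neutralPart b h φ t ≤ (1 - b * exp (-(r * h))) * delayedLogistic h φ t := by
  have hshift := mul_le_mul_of_nonneg_left (hφ.exp_mul_le_shift hb0 hb1 hh hr ht) hb0
  have hv : neutralPart b h φ t ≤ (1 - b * exp (-(r * h))) * φ t := by
    rw [neutralPart]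
    linarith
  have hden := (one_sub_mul_exp_neg_pos hb0 hb1 (mul_nonneg hr0 hh)).le
  calc (1 - ε) * neutralPart b h φ t
      ≤ (1 - ε) * ((1 - b * exp (-(r * h))) * φ t) :=
        mul_le_mul_of_nonneg_left hv (sub_nonneg.2 hε)
    _ = (1 - b * exp (-(r * h))) * (φ t * (1 - ε)) := by ring
    _ ≤ (1 - b * exp (-(r * h))) * delayedLogistic h φ t :=
        mul_le_mul_of_nonneg_left
          (mul_le_mul_of_nonneg_left (by linarith) (hφ.nonneg t)) hden

theorem deriv_le_sub_mul_neutralPart (hφ : IsProfile b c h 1 φ p) (hb0 : 0 ≤ b) (hb1 : b < 1)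
    (hh : 0 ≤ h) (hc : 0 < c) (htop : Tendsto φ atTop (𝓝 1)) {r ε T : ℝ} (hr0 : 0 ≤ r)
    (hrc : r ≤ c) (hε0 : 0 ≤ ε) (hε1 : ε ≤ 1) (hsmall : ∀ t ≤ T, φ (t - h) ≤ ε)
    (hsymbol : growthSymbol b c h r ≤ 1 - 2 * ε)
    (hr : ∀ t ≤ T, p t ≤ r * neutralPart b h φ t) {t : ℝ} (ht : t ≤ T) :
    p t ≤ (r - ε / (2 * c)) * neutralPart b h φ t := by
  set d := 1 - b * exp (-(r * h)) with hd
  have hd0 : 0 < d := one_sub_mul_exp_neg_pos hb0 hb1 (mul_nonneg hr0 hh)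
  have hd1 : d ≤ 1 := sub_le_self _ (mul_nonneg hb0 (Real.exp_pos _).le)
  refine deriv_le_sub_mul_of_le (Q := (1 - ε) / d) (R := delayedLogistic h φ) hc (by positivity)
    (fun t _ => hφ.hasDerivAt_neutralPart t)
    (fun t _ => by simpa only [one_mul] using hφ.hasDerivAt_deriv t)
    (fun t _ => hφ.neutralPart_pos hb0 hb1 hh zero_le_one hc htop t)
    (fun t ht => ?_) hr hrc ?_ ht
  · rw [div_mul_eq_mul_div, div_le_iff₀' hd0]
    exact hφ.mul_neutralPart_le_delayedLogistic hb0 hb1 hh hr0 hε1 hr ht (hsmall t ht)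
  · have hη : 2 * c * (ε / (2 * c)) = ε := by field_simp
    have hQ : ε + (c * r - r ^ 2) ≤ (1 - ε) / d := by
      rw [le_div_iff₀ hd0, add_mul]
      have := mul_le_of_le_one_right hε0 hd1
      rw [growthSymbol, ← hd] at hsymbol
      linarith
    linarith

theorem exists_one_le_growthSymbol (hφ : IsProfile b c h 1 φ p) (hb0 : 0 ≤ b) (hb1 : b < 1)
    (hh : 0 ≤ h) (hc : 0 < c) (hbot : Tendsto φ atBot (𝓝 0)) (htop : Tendsto φ atTop (𝓝 1)) :
    ∃ z > 0, 1 ≤ growthSymbol b c h z := by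
  by_contra! hlt
  obtain ⟨z₀, hz₀, hmax⟩ := isCompact_Icc.exists_isMaxOn (nonempty_Icc.2 hc.le)
    (continuous_growthSymbol b c h).continuousOn
  have hmax0 : 0 ≤ growthSymbol b c h z₀ := by
    simpa only [growthSymbol_zero] using isMaxOn_iff.1 hmax 0 (left_mem_Icc.2 hc.le)
  have hmax1 : growthSymbol b c h z₀ < 1 := by
    rcases hz₀.1.eq_or_lt with rfl | hpos
    · simp only [growthSymbol_zero, zero_lt_one]
    · exact hlt z₀ hpos
  set ε := (1 - growthSymbol b c h z₀) / 2 with hε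
  have hε0 : 0 < ε := by linarith
  obtain ⟨T, hT⟩ := eventually_atBot.1
    ((hbot.comp (tendsto_sub_const_of_eq (Or.inr rfl) h)).eventually_le_const hε0)
  refine not_bddAbove_of_add_mem
    (S := {x | 0 ≤ x ∧ ∀ t ≤ T, p t ≤ (c - x) * neutralPart b h φ t})
    ⟨0, le_rfl, fun t _ => ?_⟩ (fun _ _ => ⟨ε / (2 * c), by positivity, ?_⟩) ⟨c, ?_⟩
  · simpa only [sub_zero] using hφ.deriv_le_mul_neutralPart hb1.le zero_le_one hc.le t
  all_goals
    rintro x ⟨hx, hr⟩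
    have hxc : 0 ≤ c - x := nonneg_of_mul_nonneg_left
      ((hφ.deriv_nonneg zero_le_one hc T).trans (hr T le_rfl))
      (hφ.neutralPart_pos hb0 hb1 hh zero_le_one hc htop T)
  · have hsymbol := isMaxOn_iff.1 hmax (c - x) ⟨hxc, sub_le_self c hx⟩
    refine fun _ => ⟨by positivity, fun t ht => ?_⟩
    rw [← sub_sub]
    exact hφ.deriv_le_sub_mul_neutralPart hb0 hb1 hh hc htop hxc (sub_le_self c hx) hε0.le
      (by linarith) hT (by linarith) hr ht
  · linarith

end IsProfile

/-! ### Decay at `+∞` -/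

theorem hasSum_pow_mul_neutralPart {b h C : ℝ} {φ : ℝ → ℝ} (hb0 : 0 ≤ b) (hb1 : b < 1)
    (hC : ∀ t, |φ t| ≤ C) (t : ℝ) :
    HasSum (fun n : ℕ => b ^ n * neutralPart b h φ (t - n * h)) (φ t) := by
  have hsummable : Summable fun n : ℕ => b ^ n * φ (t - n * h) := by
    refine .of_norm_bounded ((summable_geometric_of_lt_one hb0 hb1).mul_right C) fun n => ?_
    rw [norm_mul, Real.norm_of_nonneg (pow_nonneg hb0 n)]
    exact mul_le_mul_of_nonneg_left (hC _) (pow_nonneg hb0 n)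
  have htelescope := hsummable.hasSum.sub ((hasSum_nat_add_iff' 1).2 hsummable.hasSum)
  convert! htelescope using 1
  · funext n
    have hshift : t - n * h - h = t - (n + 1 : ℕ) * h := by
      push_cast
      ring
    rw [neutralPart, hshift, pow_succ]
    ring
  · simp

theorem exists_hasDerivAt_of_neutralPart {b h C C' : ℝ} {φ p : ℝ → ℝ} (hb0 : 0 ≤ b) (hb1 : b < 1)
    (hC : ∀ t, |φ t| ≤ C) (hp : ∀ t, HasDerivAt (neutralPart b h φ) (p t) t)
    (hC' : ∀ t, |p t| ≤ C') :
    ∃ φ' : ℝ → ℝ, (∀ t, HasDerivAt φ (φ' t) t) ∧ neutralPart b h φ' = p := by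
  have hseries : φ = fun t => ∑' n : ℕ, b ^ n * neutralPart b h φ (t - n * h) :=
    funext fun t => (hasSum_pow_mul_neutralPart hb0 hb1 hC t).tsum_eq.symm
  have hderiv (t : ℝ) : HasDerivAt φ (∑' n : ℕ, b ^ n * p (t - n * h)) t := by
    conv => arg 1; rw [hseries]
    refine hasDerivAt_tsum (u := fun n => b ^ n * C') (y₀ := 0)
      ((summable_geometric_of_lt_one hb0 hb1).mul_right C')
      (fun n x => ((hp (x - n * h)).comp_sub_const x (n * h)).const_mul (b ^ n)) (fun n x => ?_)
      (hasSum_pow_mul_neutralPart hb0 hb1 hC 0).summable t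
    rw [norm_mul, Real.norm_of_nonneg (pow_nonneg hb0 n)]
    exact mul_le_mul_of_nonneg_left (hC' _) (pow_nonneg hb0 n)
  refine ⟨_, hderiv, funext fun t => ?_⟩
  exact ((hderiv t).sub (((hderiv (t - h)).comp_sub_const t h).const_mul b)).unique (hp t)

theorem eq_zero_of_hasDerivAt_of_const {f : ℝ → ℝ} {f' C s t : ℝ} (hf : HasDerivAt f f' t)
    (hst : s < t) (hconst : ∀ r > s, f r = C) : f' = 0 := by
  have heq : f =ᶠ[𝓝 t] fun _ => C := by
    filter_upwards [lt_mem_nhds hst] with r hr using hconst r hr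
  exact (hf.congr_of_eventuallyEq heq.symm).unique (hasDerivAt_const t C)

theorem eventually_le_mul_of_le_mul_shift {z w : ℝ → ℝ} {b q h M η : ℝ} (hb0 : 0 ≤ b)
    (hq : q < 1) (hw : ∀ t, 0 < w t) (hM : 0 ≤ M) (hzM : ∀ t, z t ≤ M * w t)
    (hz : ∀ᶠ t in atTop, z t ≤ b * z (t - h))
    (hwq : ∀ᶠ t in atTop, b * w (t - h) ≤ q * w t) (hη : 0 < η) :
    ∀ᶠ t in atTop, z t ≤ η * w t := by
  obtain ⟨t, ht⟩ := hwq.exists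
  have hq0 : 0 ≤ q := nonneg_of_mul_nonneg_left ((mul_nonneg hb0 (hw _).le).trans ht) (hw t)
  have hpow (n : ℕ) : ∀ᶠ t in atTop, z t ≤ M * q ^ n * w t := by
    induction n with
    | zero => exact Eventually.of_forall fun t => by simpa using hzM t
    | succ n ih =>
      filter_upwards [hz, hwq, (tendsto_sub_const_of_eq (Or.inl rfl) h).eventually ih]
        with t hzt hwt hprev
      calc z t ≤ b * z (t - h) := hzt
        _ ≤ b * (M * q ^ n * w (t - h)) := mul_le_mul_of_nonneg_left hprev hb0
        _ = M * q ^ n * (b * w (t - h)) := by ring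
        _ ≤ M * q ^ n * (q * w t) := mul_le_mul_of_nonneg_left hwt (by positivity)
        _ = M * q ^ (n + 1) * w t := by ring
  have hlim : Tendsto (fun n : ℕ => M * q ^ n) atTop (𝓝 0) := by
    simpa using (tendsto_pow_atTop_nhds_zero_of_lt_one hq0 hq).const_mul M
  obtain ⟨n, hn⟩ := (hlim.eventually_le_const hη).exists
  filter_upwards [hpow n] with t ht
  exact ht.trans (mul_le_mul_of_nonneg_right hn (hw t).le)

theorem one_sub_le_exp_mul_one_sub_shift {φ φ' : ℝ → ℝ} {r s : ℝ}
    (hφ : ∀ t, HasDerivAt φ (φ' t) t) (hr : ∀ᶠ t in atTop, r * (1 - φ t) ≤ φ' t) (hs : 0 ≤ s) :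
    ∀ᶠ t in atTop, 1 - φ t ≤ exp (-(r * s)) * (1 - φ (t - s)) := by
  obtain ⟨T, hT⟩ := eventually_atTop.1 hr
  filter_upwards [eventually_ge_atTop (T + s)] with t ht
  have hdecay := le_mul_exp_of_hasDerivAt_le_mul (f := fun x => 1 - φ x) (a := -r)
    (sub_le_self t hs) (fun x _ => (hφ x).const_sub 1)
    (fun x hx => by linarith [hT x (by linarith [hx.1])])
  rwa [sub_sub_cancel, mul_comm, neg_mul] at hdecay

/-- The exponential decay rates of `1 - φ` at `+∞`, in differential form (`φ'` is the derivative
of `φ`). -/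
def decayRates (φ φ' : ℝ → ℝ) : Set ℝ := {r | 0 ≤ r ∧ ∀ᶠ t in atTop, r * (1 - φ t) ≤ φ' t}

theorem exists_pos_forall_decaySymbol_shift_lt {b c h k R : ℝ} (hR : decaySymbol b c h R < k) :
    ∃ η > 0, ∀ r, R - η < r → r ≤ R →
      ((r + 2 * η) ^ 2 + c * (r + 2 * η)) * (exp (-(r * h)) - b) < k := by
  have hcont : Continuous fun x : ℝ × ℝ =>
      ((x.1 + 2 * x.2) ^ 2 + c * (x.1 + 2 * x.2)) * (exp (-(x.1 * h)) - b) := by fun_prop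
  have hnear := (hcont.tendsto (R, 0)).eventually_lt_const (u := k)
    (by simpa [decaySymbol] using hR)
  obtain ⟨ε, hε, hball⟩ := Metric.eventually_nhds_iff.1 hnear
  refine ⟨ε / 2, half_pos hε, fun r hlt hle => hball (y := (r, ε / 2)) ?_⟩
  rw [Prod.dist_eq, max_lt_iff, Real.dist_eq, Real.dist_eq, sub_zero, abs_of_nonpos (by linarith),
    abs_of_pos (half_pos hε)]
  constructor <;> linarith

namespace IsProfile

variable {b c h k : ℝ} {φ p φ' : ℝ → ℝ}

theorem exists_hasDerivAt (hφ : IsProfile b c h k φ p) (hb0 : 0 ≤ b) (hb1 : b < 1) (hk : 0 ≤ k)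
    (hc : 0 < c) : ∃ φ' : ℝ → ℝ, (∀ t, HasDerivAt φ (φ' t) t) ∧ neutralPart b h φ' = p :=
  exists_hasDerivAt_of_neutralPart hb0 hb1
    (fun t => by rw [abs_of_nonneg (hφ.nonneg t)]; exact hφ.le_one t) hφ.hasDerivAt_neutralPart
    fun t => by rw [abs_of_nonneg (hφ.deriv_nonneg hk hc t)]; exact hφ.deriv_le hb0 hb1.le hk hc t

theorem neutralPart_le_one_sub (hφ : IsProfile b c h k φ p) (hk : 0 ≤ k) (hc : 0 < c)
    (htop : Tendsto φ atTop (𝓝 1)) (t : ℝ) : neutralPart b h φ t ≤ 1 - b := by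
  have hmono : Monotone (neutralPart b h φ) :=
    monotone_of_hasDerivAt_nonneg hφ.hasDerivAt_neutralPart (hφ.deriv_nonneg hk hc)
  simpa only [mul_one] using hmono.ge_of_tendsto (tendsto_neutralPart (Or.inl rfl) htop b h) t

theorem eq_one_of_gt_sub (hφ : IsProfile b c h k φ p) (hb0 : 0 ≤ b) (hk : 0 < k) (hc : 0 < c)
    (htop : Tendsto φ atTop (𝓝 1)) {s : ℝ} (hs : ∀ t > s, φ t = 1) : ∀ t > s - h, φ t = 1 := by
  intro t ht
  have hconst (r : ℝ) (hr : s < r) : neutralPart b h φ r = 1 - b := by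
    refine (hφ.neutralPart_le_one_sub hk.le hc htop r).antisymm ?_
    have := mul_le_of_le_one_right hb0 (hφ.le_one (r - h))
    rw [neutralPart, hs r hr]
    linarith
  have hp (r : ℝ) (hr : s < r) : p r = 0 :=
    eq_zero_of_hasDerivAt_of_const (hφ.hasDerivAt_neutralPart r) hr hconst
  have hst : s < t + h := sub_lt_iff_lt_add.1 ht
  have hp' := eq_zero_of_hasDerivAt_of_const (hφ.hasDerivAt_deriv (t + h)) hst hp
  rw [delayedLogistic, hp _ hst, hs _ hst, add_sub_cancel_right] at hp'
  have : k * (1 - φ t) = 0 := by linarith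
  linarith [(mul_eq_zero.1 this).resolve_left hk.ne']

theorem lt_one (hφ : IsProfile b c h k φ p) (hb0 : 0 ≤ b) (hh : 0 < h) (hk : 0 < k) (hc : 0 < c)
    (hbot : Tendsto φ atBot (𝓝 0)) (htop : Tendsto φ atTop (𝓝 1)) (t : ℝ) : φ t < 1 := by
  by_contra! hge
  have hone (n : ℕ) : ∀ s > t - n * h, φ s = 1 := by
    induction n with
    | zero =>
      intro s hs
      refine (hφ.le_one s).antisymm (hge.trans (hφ.mono ?_))
      simpa using hs.le
    | succ n ih =>
      have hshift : t - (n + 1 : ℕ) * h = t - n * h - h := by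
        push_cast
        ring
      rw [hshift]
      exact hφ.eq_one_of_gt_sub hb0 hk hc htop ih
  obtain ⟨s, hs⟩ := (hbot.eventually_lt_const one_pos).exists
  obtain ⟨n, hn⟩ := exists_nat_gt ((t - s) / h)
  rw [div_lt_iff₀ hh] at hn
  exact hs.ne (hone n s (by linarith))

theorem exists_mul_one_sub_le (hφ : IsProfile b c h k φ p) (hh : 0 < h) (hk : 0 < k) (hc : 0 < c)
    (htop : Tendsto φ atTop (𝓝 1)) :
    ∃ κ > 0, ∀ᶠ t in atTop, κ * (1 - φ (t - h / 2)) ≤ 1 - b - neutralPart b h φ t := by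
  have hψ : 0 < exp (c * -(h / 2)) - 1 - c * -(h / 2) := by
    have hne : c * -(h / 2) ≠ 0 := by simp [hc.ne', hh.ne']
    linarith [Real.add_one_lt_exp hne]
  obtain ⟨T, hT⟩ := eventually_atTop.1 (htop.eventually_const_le one_half_lt_one)
  refine ⟨k / 2 * ((exp (c * -(h / 2)) - 1 - c * -(h / 2)) / c ^ 2), by positivity,
    eventually_atTop.2 ⟨T, fun t ht => ?_⟩⟩
  have hcompare := mul_le_of_le_hasDerivAt_sub_mul (x := fun s => 1 - b - neutralPart b h φ s)
    (a := k / 2 * (1 - φ (t - h / 2))) (s := t) (e := t + h / 2) hc (by linarith)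
    (fun s _ => (hφ.hasDerivAt_neutralPart s).const_sub (1 - b))
    (fun s _ => (hφ.hasDerivAt_deriv s).neg) (fun s hs => ?_)
    (sub_nonneg.2 (hφ.neutralPart_le_one_sub hk.le hc htop _))
    (neg_nonpos.2 (hφ.deriv_nonneg hk.le hc _))
  · rw [sub_add_cancel_left] at hcompare
    linarith
  · have hreact : 1 / 2 * (1 - φ (t - h / 2)) ≤ delayedLogistic h φ s :=
      mul_le_mul (hT s (ht.trans hs.1)) (sub_le_sub_left (hφ.mono (by linarith [hs.2])) 1)
        (sub_nonneg.2 (hφ.le_one _)) (hφ.nonneg s)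
    linarith [mul_le_mul_of_nonneg_left hreact hk.le]

theorem le_neg_log_mul_of_gap (hφ : IsProfile b c h k φ p) (hb0 : 0 ≤ b) (hh : 0 < h)
    (hlt : ∀ t, φ t < 1) (hφ' : ∀ t, HasDerivAt φ (φ' t) t) {κ r : ℝ} (hκ : 0 < κ)
    (hgap : ∀ᶠ t in atTop, κ * (1 - φ (t - h / 2)) ≤ 1 - b - neutralPart b h φ t)
    (hr : ∀ᶠ t in atTop, r * (1 - φ t) ≤ φ' t) : r ≤ -Real.log κ * (2 / h) := by
  obtain ⟨t, hgap, hdecay⟩ :=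
    (hgap.and (one_sub_le_exp_mul_one_sub_shift hφ' hr (half_pos hh).le)).exists
  have hw := mul_nonneg hb0 (sub_nonneg.2 (hφ.le_one (t - h)))
  rw [neutralPart] at hgap
  have hκr : κ ≤ exp (-(r * (h / 2))) :=
    le_of_mul_le_mul_right (by linarith) (sub_pos.2 (hlt (t - h / 2)))
  have hlog := (Real.log_le_iff_le_exp hκ).2 hκr
  rw [mul_div_assoc', le_div_iff₀ hh]
  linarith

theorem eventually_mul_le_deriv (hφ : IsProfile b c h k φ p) (hk : 0 ≤ k) (hc : 0 < c)
    (htop : Tendsto φ atTop (𝓝 1)) {q ρ : ℝ} (hρ : 0 ≤ ρ) (hq : (ρ ^ 2 + c * ρ) * q < k)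
    (hle : ∀ᶠ t in atTop, 1 - b - neutralPart b h φ t ≤ q * (1 - φ (t - h))) :
    ∀ᶠ t in atTop, ρ * (1 - b - neutralPart b h φ t) ≤ p t := by
  have hkφ : ∀ᶠ t in atTop, (ρ ^ 2 + c * ρ) * q ≤ k * φ t :=
    (htop.const_mul k).eventually_const_le (by rwa [mul_one])
  obtain ⟨T, hT⟩ := eventually_atTop.1 (hle.and hkφ)
  have hbdd : ∀ᶠ t in atTop, ρ * (1 - b - neutralPart b h φ t) - p t ≤ 1 := by
    have hlim := (((tendsto_neutralPart (Or.inl rfl) htop b h).const_sub (1 - b)).const_mul ρ).sub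
      (hφ.tendsto_deriv_zero hk (Or.inl rfl) htop)
    exact hlim.eventually_le_const (by simp)
  filter_upwards [eventually_ge_atTop T] with t ht
  refine sub_nonpos.1 (nonpos_of_mul_le_hasDerivAt
    (f := fun s => ρ * (1 - b - neutralPart b h φ s) - p s) (add_pos_of_pos_of_nonneg hc hρ)
    (fun s _ => (((hφ.hasDerivAt_neutralPart s).const_sub (1 - b)).const_mul ρ).sub
      (hφ.hasDerivAt_deriv s)) (fun s hs => ?_) hbdd ht)
  obtain ⟨hle, hkφ⟩ := hT s hs
  have hupper := mul_le_mul_of_nonneg_left hle (a := ρ ^ 2 + c * ρ) (by positivity)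
  have hlower := mul_le_mul_of_nonneg_right hkφ (sub_nonneg.2 (hφ.le_one (s - h)))
  rw [delayedLogistic]
  linarith

theorem eventually_add_mul_one_sub_le (hφ : IsProfile b c h k φ p) (hb0 : 0 ≤ b) (hh : 0 ≤ h)
    (hk : 0 ≤ k) (hc : 0 < c) (htop : Tendsto φ atTop (𝓝 1)) (hlt : ∀ t, φ t < 1)
    (hφ' : ∀ t, HasDerivAt φ (φ' t) t) (hp : neutralPart b h φ' = p) {κ r η : ℝ} (hκ : 0 < κ)
    (hgap : ∀ᶠ t in atTop, κ * (1 - φ (t - h / 2)) ≤ 1 - b - neutralPart b h φ t) (hr0 : 0 ≤ r)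
    (hη : 0 < η) (hsymbol : ((r + 2 * η) ^ 2 + c * (r + 2 * η)) * (exp (-(r * h)) - b) < k)
    (hr : ∀ᶠ t in atTop, r * (1 - φ t) ≤ φ' t) :
    ∀ᶠ t in atTop, (r + η) * (1 - φ t) ≤ φ' t := by
  set ρ := r + 2 * η with hρ
  have hle : ∀ᶠ t in atTop,
      1 - b - neutralPart b h φ t ≤ (exp (-(r * h)) - b) * (1 - φ (t - h)) := by
    filter_upwards [one_sub_le_exp_mul_one_sub_shift hφ' hr hh] with t ht
    rw [neutralPart]
    linarith
  have hρp := hφ.eventually_mul_le_deriv hk hc htop (by positivity) hsymbol hle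
  have hratio : ∀ᶠ t in atTop, b * (1 - φ (t - h)) ≤ (1 - κ) * (1 - φ t) := by
    filter_upwards [hgap] with t ht
    have := mul_le_mul_of_nonneg_left (hφ.mono (sub_le_self t (div_nonneg hh zero_le_two))) hκ.le
    rw [neutralPart] at ht
    linarith
  have hdefect := eventually_le_mul_of_le_mul_shift (z := fun t => ρ * (1 - φ t) - φ' t)
    (M := ρ) hb0 (sub_lt_self 1 hκ) (fun t => sub_pos.2 (hlt t)) (by positivity)
    (fun t => sub_le_self _ ((hφ' t).nonneg_of_monotone hφ.mono)) (hρp.mono fun t ht => by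
      rw [← hp, neutralPart, neutralPart] at ht
      linarith) hratio hη
  filter_upwards [hdefect] with t ht
  rw [hρ] at ht
  linarith

theorem exists_one_le_decaySymbol (hφ : IsProfile b c h 1 φ p) (hb0 : 0 ≤ b) (hb1 : b < 1)
    (hh : 0 < h) (hc : 0 < c) (hbot : Tendsto φ atBot (𝓝 0)) (htop : Tendsto φ atTop (𝓝 1)) :
    ∃ r > 0, 1 ≤ decaySymbol b c h r := by
  obtain ⟨φ', hφ', hp⟩ := hφ.exists_hasDerivAt hb0 hb1 zero_le_one hc
  have hlt := hφ.lt_one hb0 hh one_pos hc hbot htop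
  obtain ⟨κ, hκ, hgap⟩ := hφ.exists_mul_one_sub_le hh one_pos hc htop
  have hnonempty : (decayRates φ φ').Nonempty :=
    ⟨0, le_rfl, .of_forall fun t => by simpa using (hφ' t).nonneg_of_monotone hφ.mono⟩
  have hbdd : BddAbove (decayRates φ φ') :=
    ⟨_, fun r hr => hφ.le_neg_log_mul_of_gap hb0 hh hlt hφ' hκ hgap hr.2⟩
  by_contra! hsymbol
  refine not_bddAbove_of_add_mem hnonempty (fun R hR => ?_) hbdd
  obtain ⟨r₀, hr₀⟩ := hnonempty
  have hR1 : decaySymbol b c h R < 1 := by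
    rcases (hr₀.1.trans (hR.1 hr₀)).eq_or_lt with rfl | hRpos
    · exact (decaySymbol_zero b c h).trans_lt one_pos
    · exact hsymbol R hRpos
  obtain ⟨η, hη, hstep⟩ := exists_pos_forall_decaySymbol_shift_lt hR1
  exact ⟨η, hη, fun r hr hRr => ⟨by linarith [hr.1],
    hφ.eventually_add_mul_one_sub_le hb0 hh.le zero_le_one hc htop hlt hφ' hp hκ hgap hr.1 hη
      (hstep r hRr (hR.1 hr)) hr.2⟩⟩

end IsProfile

/-! ### Fronts and profiles -/

theorem contDiff_two_of_hasDerivAt {f f' f'' : ℝ → ℝ} (hf : ∀ t, HasDerivAt f (f' t) t)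
    (hf' : ∀ t, HasDerivAt f' (f'' t) t) (hcont : Continuous f'') : ContDiff ℝ 2 f := by
  rw [← one_add_one_eq_two, contDiff_succ_iff_deriv, funext fun t => (hf t).deriv,
    contDiff_one_iff_deriv, funext fun t => (hf' t).deriv]
  exact ⟨fun t => (hf t).differentiableAt, by simp, fun t => (hf' t).differentiableAt, hcont⟩

theorem isProfile_of_isMonotoneFront {b c τ : ℝ} {φ : ℝ → ℝ} (hφ : IsMonotoneFront b c τ φ) :
    IsProfile b c (c * τ) 1 φ (deriv (neutralPart b (c * τ) φ)) := by
  obtain ⟨hmono, hsmooth, heq, hbot, htop⟩ := hφ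
  rw [← one_add_one_eq_two] at hsmooth
  obtain ⟨hdiff, -, hsmooth'⟩ := contDiff_succ_iff_deriv.1 hsmooth
  refine ⟨hmono, hmono.le_of_tendsto hbot, hmono.ge_of_tendsto htop,
    fun t => (hdiff t).hasDerivAt, fun t => ?_⟩
  refine ((hsmooth'.differentiable one_ne_zero) t).hasDerivAt.congr_deriv ?_
  have hode : deriv (deriv (neutralPart b (c * τ) φ)) t - c * deriv (neutralPart b (c * τ) φ) t
      + delayedLogistic (c * τ) φ t = 0 := heq t
  change deriv (deriv (neutralPart b (c * τ) φ)) t = _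
  linarith

theorem inD_of_isMonotoneFront {b c τ : ℝ} {φ : ℝ → ℝ} (hb0 : 0 ≤ b) (hb1 : b < 1) (hτ : 0 < τ)
    (hc : 0 < c) (hφ : IsMonotoneFront b c τ φ) : inD b τ c := by
  have hprofile := isProfile_of_isMonotoneFront hφ
  obtain ⟨-, -, -, hbot, htop⟩ := hφ
  have hh : 0 < c * τ := mul_pos hc hτ
  exact (inD_iff hb0 hb1 hc hτ).2
    ⟨hprofile.exists_one_le_growthSymbol hb0 hb1 hh.le hc hbot htop,
      hprofile.exists_one_le_decaySymbol hb0 hb1 hh hc hbot htop⟩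

namespace IsProfile

variable {b c h k : ℝ} {φ p : ℝ → ℝ}

theorem abs_sub_le (hφ : IsProfile b c h k φ p) (hb0 : 0 ≤ b) (hb1 : b < 1) (hh : 0 ≤ h)
    (hk : 0 ≤ k) (hc : 0 < c) (x y : ℝ) : |φ x - φ y| ≤ c / (1 - b) * |x - y| := by
  wlog hyx : y ≤ x generalizing x y
  · rw [abs_sub_comm, abs_sub_comm x]
    exact this y x (le_of_not_ge hyx)
  have hv : Antitone fun t => neutralPart b h φ t - c * t :=
    antitone_of_hasDerivAt_nonpos
      (fun t => (hφ.hasDerivAt_neutralPart t).sub ((hasDerivAt_id t).const_mul c))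
      fun t => by simpa using hφ.deriv_le hb0 hb1.le hk hc t
  have hincrement := nonneg_of_neutralPart_nonneg (C := 1) (T := y)
    (D := fun t => c / (1 - b) * (x - y) - (φ (t + (x - y)) - φ t)) hb0 hb1 hh (fun t _ => ?_)
    (fun t _ => ?_) le_rfl
  · rw [abs_of_nonneg (sub_nonneg.2 (hφ.mono hyx)), abs_of_nonneg (sub_nonneg.2 hyx)]
    rw [add_sub_cancel] at hincrement
    linarith
  · have : 0 ≤ c / (1 - b) * (x - y) :=
      mul_nonneg (div_nonneg hc.le (sub_nonneg.2 hb1.le)) (sub_nonneg.2 hyx)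
    linarith [hφ.nonneg t, hφ.le_one (t + (x - y))]
  · have hstep := hv (le_add_of_nonneg_right (a := t) (sub_nonneg.2 hyx))
    have hcancel : (1 - b) * (c / (1 - b) * (x - y)) = c * (x - y) := by
      field_simp [sub_ne_zero.2 hb1.ne']
    have hshift : t + (x - y) - h = t - h + (x - y) := by ring
    simp only [neutralPart, hshift] at hstep ⊢
    linarith

theorem continuous (hφ : IsProfile b c h k φ p) (hb0 : 0 ≤ b) (hb1 : b < 1) (hh : 0 ≤ h)
    (hk : 0 ≤ k) (hc : 0 < c) : Continuous φ :=
  (LipschitzWith.of_dist_le' (hφ.abs_sub_le hb0 hb1 hh hk hc)).continuous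

theorem abs_deriv_sub_le (hφ : IsProfile b c h k φ p) (hb0 : 0 ≤ b) (hb1 : b < 1)
    (hk : 0 ≤ k) (hk1 : k ≤ 1) (hc : 0 < c) (x y : ℝ) : |p x - p y| ≤ (c ^ 2 + 1) * |x - y| := by
  refine convex_univ.norm_image_sub_le_of_norm_hasDerivWithin_le
    (fun t _ => (hφ.hasDerivAt_deriv t).hasDerivWithinAt) (fun t _ => ?_) (mem_univ y) (mem_univ x)
  have hp := mul_le_mul_of_nonneg_left (hφ.deriv_le hb0 hb1.le hk hc t) hc.le
  have hp0 := mul_nonneg hc.le (hφ.deriv_nonneg hk hc t)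
  have hreact := mul_le_one₀ hk1 (hφ.delayedLogistic_nonneg t) (hφ.delayedLogistic_le_one t)
  have hreact0 := mul_nonneg hk (hφ.delayedLogistic_nonneg t)
  rw [Real.norm_eq_abs, abs_le]
  constructor <;> nlinarith

theorem abs_rhs_sub_le (hφ : IsProfile b c h k φ p) (hb0 : 0 ≤ b) (hb1 : b < 1) (hh : 0 ≤ h)
    (hk : 0 ≤ k) (hk1 : k ≤ 1) (hc : 0 < c) (x y : ℝ) :
    |c * p x - k * delayedLogistic h φ x - (c * p y - k * delayedLogistic h φ y)| ≤
      (c * (c ^ 2 + 1) + 2 * (c / (1 - b))) * |x - y| := by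
  have hp := mul_le_mul_of_nonneg_left (hφ.abs_deriv_sub_le hb0 hb1 hk hk1 hc x y) hc.le
  have hx := hφ.abs_sub_le hb0 hb1 hh hk hc x y
  have hx' := hφ.abs_sub_le hb0 hb1 hh hk hc (y - h) (x - h)
  rw [sub_sub_sub_cancel_right, abs_sub_comm y x] at hx'
  have hreact : |delayedLogistic h φ x - delayedLogistic h φ y| ≤ 2 * (c / (1 - b)) * |x - y| := by
    have hsplit : delayedLogistic h φ x - delayedLogistic h φ y =
        (φ x - φ y) * (1 - φ (x - h)) + φ y * (φ (y - h) - φ (x - h)) := by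
      simp only [delayedLogistic]
      ring
    rw [hsplit]
    refine (abs_add_le _ _).trans ?_
    rw [abs_mul, abs_mul, abs_of_nonneg (sub_nonneg.2 (hφ.le_one _)), abs_of_nonneg (hφ.nonneg y)]
    have := mul_le_of_le_one_right (abs_nonneg (φ x - φ y)) (sub_le_self 1 (hφ.nonneg (x - h)))
    have := mul_le_of_le_one_left (abs_nonneg (φ (y - h) - φ (x - h))) (hφ.le_one y)
    linarith
  have hkreact := mul_le_of_le_one_left (abs_nonneg (delayedLogistic h φ x - delayedLogistic h φ y))
    hk1
  calc _ = |c * (p x - p y) - k * (delayedLogistic h φ x - delayedLogistic h φ y)| := by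
        congr 1
        ring
    _ ≤ c * |p x - p y| + k * |delayedLogistic h φ x - delayedLogistic h φ y| := by
        refine (abs_sub _ _).trans_eq ?_
        rw [abs_mul, abs_mul, abs_of_pos hc, abs_of_nonneg hk]
    _ ≤ _ := by linarith

theorem isMonotoneFront {τ : ℝ} (hφ : IsProfile b c (c * τ) 1 φ p) (hb0 : 0 ≤ b) (hb1 : b < 1)
    (hh : 0 ≤ c * τ) (hc : 0 < c) (hbot : Tendsto φ atBot (𝓝 0)) (htop : Tendsto φ atTop (𝓝 1)) :
    IsMonotoneFront b c τ φ := by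
  have hφc := hφ.continuous hb0 hb1 hh zero_le_one hc
  have hpc : Continuous p :=
    continuous_iff_continuousAt.2 fun t => (hφ.hasDerivAt_deriv t).continuousAt
  have hderiv : deriv (fun r => φ r - b * φ (r - c * τ)) = p :=
    funext fun t => (hφ.hasDerivAt_neutralPart t).deriv
  refine ⟨hφ.mono, contDiff_two_of_hasDerivAt hφ.hasDerivAt_neutralPart hφ.hasDerivAt_deriv ?_,
    fun t => ?_, hbot, htop⟩
  · unfold delayedLogistic
    fun_prop
  · rw [hderiv, (hφ.hasDerivAt_deriv t).deriv, delayedLogistic]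
    ring

end IsProfile

/-! ### Limits of profiles -/

theorem abs_sub_sub_deriv_mul_le {f f' : ℝ → ℝ} {K : ℝ} (hf : ∀ t, HasDerivAt f (f' t) t)
    (hf' : ∀ x y, |f' x - f' y| ≤ K * |x - y|) (hK : 0 ≤ K) (t y : ℝ) :
    |f y - f t - f' t * (y - t)| ≤ K * |y - t| ^ 2 := by
  have hderiv (x : ℝ) : HasDerivAt (fun x => f x - f' t * x) (f' x - f' t) x :=
    ((hf x).sub ((hasDerivAt_id x).const_mul (f' t))).congr_deriv (by rw [mul_one])
  have hmean := (convex_uIcc t y).norm_image_sub_le_of_norm_hasDerivWithin_le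
    (C := K * |y - t|) (fun x _ => (hderiv x).hasDerivWithinAt)
    (fun x hx => (hf' x t).trans (mul_le_mul_of_nonneg_left (abs_sub_left_of_mem_uIcc hx) hK))
    left_mem_uIcc right_mem_uIcc
  calc _ = ‖f y - f' t * y - (f t - f' t * t)‖ := by
        rw [Real.norm_eq_abs]
        congr 1
        ring
    _ ≤ K * |y - t| * ‖y - t‖ := hmean
    _ = K * |y - t| ^ 2 := by rw [Real.norm_eq_abs]; ring

theorem hasDerivAt_of_tendsto_of_lipschitz {ι : Type*} {l : Filter ι} [l.NeBot]
    {f f' : ι → ℝ → ℝ} {g g' : ℝ → ℝ} {K : ℝ} (hK : 0 ≤ K)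
    (hf : ∀ n t, HasDerivAt (f n) (f' n t) t)
    (hf' : ∀ n x y, |f' n x - f' n y| ≤ K * |x - y|)
    (hg : ∀ t, Tendsto (fun n => f n t) l (𝓝 (g t)))
    (hg' : ∀ t, Tendsto (fun n => f' n t) l (𝓝 (g' t))) (t : ℝ) : HasDerivAt g (g' t) t := by
  have hremainder (y : ℝ) : |g y - g t - g' t * (y - t)| ≤ K * |y - t| ^ 2 :=
    le_of_tendsto ((((hg y).sub (hg t)).sub ((hg' t).mul_const (y - t))).abs)
      (Eventually.of_forall fun n => abs_sub_sub_deriv_mul_le (hf n) (hf' n) hK t y)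
  rw [hasDerivAt_iff_isLittleO]
  have hbigO : (fun y => g y - g t - (y - t) • g' t) =O[𝓝 t] fun y => ‖y - t‖ ^ 2 :=
    Asymptotics.IsBigO.of_bound K (Eventually.of_forall fun y => by
      simpa [mul_comm (y - t)] using hremainder y)
  exact hbigO.trans_isLittleO (Asymptotics.isLittleO_pow_sub_sub t one_lt_two)

theorem IsProfile.exists_tendsto {ι : Type*} {l : Filter ι} [l.NeBot] {b c h a K : ℝ} {k : ι → ℝ}
    {φ p : ι → ℝ → ℝ} (hb0 : 0 ≤ b) (hb1 : b < 1) (hh : 0 ≤ h) (hc : 0 < c)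
    (hk : ∀ n, k n ∈ Icc 0 1) (hK : Tendsto k l (𝓝 K))
    (hφ : ∀ n, IsProfile b c h (k n) (φ n) (p n)) (ha : ∀ n, φ n 0 = a) :
    ∃ ψ q, IsProfile b c h K ψ q ∧ ψ 0 = a := by
  let U : Ultrafilter ι := Ultrafilter.of l
  have hUK : Tendsto k U (𝓝 K) := hK.mono_left (Ultrafilter.of_le l)
  have hlim {f : ι → ℝ} {C : ℝ} (hf : ∀ n, f n ∈ Icc 0 C) :
      ∃ x ∈ Icc 0 C, Tendsto f U (𝓝 x) :=
    isCompact_Icc.ultrafilter_le_nhds (U.map f)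
      (le_principal_iff.2 (show ∀ᶠ n in (U : Filter ι), f n ∈ Icc 0 C from Eventually.of_forall hf))
  choose ψ hψmem hψ using fun t => hlim fun n => ⟨(hφ n).nonneg t, (hφ n).le_one t⟩
  choose q _ hq using fun t => hlim fun n =>
    ⟨(hφ n).deriv_nonneg (hk n).1 hc t, (hφ n).deriv_le hb0 hb1.le (hk n).1 hc t⟩
  refine ⟨ψ, q, ⟨fun x y hxy => le_of_tendsto_of_tendsto' (hψ x) (hψ y) fun n => (hφ n).mono hxy,
    fun t => (hψmem t).1, fun t => (hψmem t).2, ?_, ?_⟩,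
    tendsto_nhds_unique (hψ 0) (by simp only [ha, tendsto_const_nhds])⟩
  · exact hasDerivAt_of_tendsto_of_lipschitz (by positivity)
      (fun n => (hφ n).hasDerivAt_neutralPart)
      (fun n => (hφ n).abs_deriv_sub_le hb0 hb1 (hk n).1 (hk n).2 hc)
      (fun t => (hψ t).sub ((hψ (t - h)).const_mul b)) hq
  · have : 0 ≤ c / (1 - b) := div_nonneg hc.le (sub_nonneg.2 hb1.le)
    exact hasDerivAt_of_tendsto_of_lipschitz (by positivity) (fun n => (hφ n).hasDerivAt_deriv)
      (fun n => (hφ n).abs_rhs_sub_le hb0 hb1 hh (hk n).1 (hk n).2 hc) hq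
      fun t => ((hq t).const_mul c).sub
        (hUK.mul ((hψ t).mul ((hψ (t - h)).const_sub 1)))

/-! ### Exponentially weighted means -/

open MeasureTheory

/-- Measurable functions with values in `[0, C]`. -/
structure IsDensity (C : ℝ) (g : ℝ → ℝ) : Prop where
  measurable : Measurable g
  nonneg : ∀ t, 0 ≤ g t
  le : ∀ t, g t ≤ C

namespace IsDensity

variable {a C : ℝ} {g : ℝ → ℝ}

theorem const {x : ℝ} (hx : 0 ≤ x) (hxC : x ≤ C) : IsDensity C fun _ => x :=
  ⟨measurable_const, fun _ => hx, fun _ => hxC⟩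

theorem comp (hg : IsDensity C g) {e : ℝ → ℝ} (he : Measurable e) : IsDensity C fun u => g (e u) :=
  ⟨hg.measurable.comp he, fun u => hg.nonneg (e u), fun u => hg.le (e u)⟩

theorem sub {D : ℝ} {f : ℝ → ℝ} (hg : IsDensity C g) (hf : IsDensity D f) (hle : f ≤ g) :
    IsDensity C (g - f) :=
  ⟨hg.measurable.sub hf.measurable, fun t => sub_nonneg.2 (hle t),
    fun t => (sub_le_self _ (hf.nonneg t)).trans (hg.le t)⟩

theorem integrableOn (hg : IsDensity C g) (ha : 0 < a) (t : ℝ) :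
    IntegrableOn (fun u => exp (-a * u) * g u) (Ioi t) :=
  (integrableOn_exp_mul_Ioi (neg_neg_of_pos ha) t).mul_bdd hg.measurable.aestronglyMeasurable
    (Eventually.of_forall fun u => (Real.norm_of_nonneg (hg.nonneg u)).trans_le (hg.le u))

end IsDensity

/-- The Laplace transform of `g` at `a`. -/
noncomputable def laplaceIntegral (a : ℝ) (g : ℝ → ℝ) : ℝ := ∫ u in Ioi 0, exp (-a * u) * g u

/-- The unnormalized mean of `g` over `[t, ∞)` with weight `e^{-a (r - t)}` at `r`; it is
the solution `x` of `x' = a x - g` which is bounded at `+∞`. -/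
noncomputable def futureMean (a : ℝ) (g : ℝ → ℝ) (t : ℝ) : ℝ := laplaceIntegral a fun u => g (t + u)

/-- The unnormalized mean of `g` over `(-∞, t]` with weight `e^{-a (t - r)}` at `r`; it is
the solution `x` of `x' = g - a x` which is bounded at `-∞`. -/
noncomputable def pastMean (a : ℝ) (g : ℝ → ℝ) (t : ℝ) : ℝ := laplaceIntegral a fun u => g (t - u)

section LaplaceIntegral

variable {a C D : ℝ} {f g : ℝ → ℝ}

theorem laplaceIntegral_mono (ha : 0 < a) (hf : IsDensity C f) (hg : IsDensity D g) (hle : f ≤ g) :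
    laplaceIntegral a f ≤ laplaceIntegral a g :=
  integral_mono (hf.integrableOn ha 0) (hg.integrableOn ha 0) fun u =>
    mul_le_mul_of_nonneg_left (hle u) (Real.exp_pos _).le

theorem laplaceIntegral_nonneg (a : ℝ) (hg : 0 ≤ g) : 0 ≤ laplaceIntegral a g :=
  integral_nonneg fun u => mul_nonneg (Real.exp_pos _).le (hg u)

theorem laplaceIntegral_congr (hfg : EqOn f g (Ioi 0)) :
    laplaceIntegral a f = laplaceIntegral a g :=
  setIntegral_congr_fun measurableSet_Ioi fun u hu => by simp only [hfg hu]

theorem laplaceIntegral_sub_mul (ha : 0 < a) (hf : IsDensity C f) (hg : IsDensity D g) (b : ℝ) :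
    laplaceIntegral a (fun u => f u - b * g u) = laplaceIntegral a f - b * laplaceIntegral a g := by
  unfold laplaceIntegral
  rw [← integral_const_mul, ← integral_sub (hf.integrableOn ha 0)
    ((hg.integrableOn ha 0).const_mul b)]
  simp only [mul_sub, mul_left_comm b]

theorem laplaceIntegral_const (ha : 0 < a) (x : ℝ) : laplaceIntegral a (fun _ => x) = x / a := by
  rw [laplaceIntegral, integral_mul_const, integral_exp_mul_Ioi (neg_neg_of_pos ha)]
  simp [div_eq_inv_mul]

theorem laplaceIntegral_exp_sub_exp {l m : ℝ} (hl : 0 < a + l) (hm : 0 < a + m) (A B : ℝ) :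
    laplaceIntegral a (fun u => A * exp (-l * u) - B * exp (-m * u)) =
      A / (a + l) - B / (a + m) := by
  have hsplit (u : ℝ) : exp (-a * u) * (A * exp (-l * u) - B * exp (-m * u)) =
      A * exp (-(a + l) * u) - B * exp (-(a + m) * u) := by
    rw [neg_add, neg_add, add_mul, add_mul, Real.exp_add, Real.exp_add]
    ring
  have hint {x : ℝ} (hx : 0 < x) (A : ℝ) : IntegrableOn (fun u => A * exp (-x * u)) (Ioi 0) :=
    (integrableOn_exp_mul_Ioi (neg_neg_of_pos hx) 0).const_mul A
  simp only [laplaceIntegral, hsplit]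
  rw [integral_sub (hint hl A) (hint hm B), integral_const_mul, integral_const_mul,
    integral_exp_mul_Ioi (neg_neg_of_pos hl), integral_exp_mul_Ioi (neg_neg_of_pos hm)]
  simp only [mul_zero, Real.exp_zero, neg_div_neg_eq, mul_one_div]

theorem integral_Ioi_comp_add_left (f : ℝ → ℝ) (x t : ℝ) :
    ∫ u in Ioi x, f (t + u) = ∫ r in Ioi (t + x), f r := by
  have hshift := (measurePreserving_add_left volume t).setIntegral_preimage_emb
    (measurableEmbedding_addLeft t) f (Ioi (t + x))
  rwa [preimage_const_add_Ioi, add_sub_cancel_left] at hshift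

theorem futureMean_eq_exp_mul_integral_Ioi (a : ℝ) (g : ℝ → ℝ) (t : ℝ) :
    futureMean a g t = exp (a * t) * ∫ r in Ioi t, exp (-a * r) * g r := by
  have hexp (u : ℝ) : exp (a * t) * exp (-a * (t + u)) = exp (-a * u) := by
    rw [← Real.exp_add]
    congr 1
    ring
  have hshift := integral_Ioi_comp_add_left (fun r => exp (a * t) * (exp (-a * r) * g r)) 0 t
  rw [add_zero] at hshift
  rw [← integral_const_mul, ← hshift, futureMean, laplaceIntegral]
  simp only [← mul_assoc, hexp]

theorem futureMean_mono (ha : 0 < a) (hf : IsDensity C f) (hg : IsDensity D g) (hle : f ≤ g) :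
    futureMean a f ≤ futureMean a g := fun t =>
  laplaceIntegral_mono ha (hf.comp (measurable_const_add t)) (hg.comp (measurable_const_add t))
    fun u => hle (t + u)

theorem pastMean_mono (ha : 0 < a) (hf : IsDensity C f) (hg : IsDensity D g) (hle : f ≤ g) :
    pastMean a f ≤ pastMean a g := fun t =>
  laplaceIntegral_mono ha (hf.comp (measurable_id.const_sub t))
    (hg.comp (measurable_id.const_sub t)) fun u => hle (t - u)

theorem pastMean_sub (ha : 0 < a) (hf : IsDensity C f) (hg : IsDensity D g) :
    pastMean a (f - g) = pastMean a f - pastMean a g := by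
  funext t
  have hsub := laplaceIntegral_sub_mul ha (hf.comp (measurable_id.const_sub t))
    (hg.comp (measurable_id.const_sub t)) 1
  simp only [one_mul] at hsub
  exact hsub

theorem pastMean_neutralPart (ha : 0 < a) (hg : IsDensity C g) (b h : ℝ) :
    pastMean a (neutralPart b h g) = neutralPart b h (pastMean a g) := by
  funext t
  have hsub := laplaceIntegral_sub_mul ha (hg.comp (measurable_id.const_sub t))
    (hg.comp (measurable_id.const_sub (t - h))) b
  simp only [id_eq, sub_right_comm t h] at hsub
  simpa only [neutralPart, pastMean, sub_right_comm t h] using hsub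

theorem futureMean_comp_add (a : ℝ) (g : ℝ → ℝ) (r t : ℝ) :
    futureMean a (fun x => g (x + r)) t = futureMean a g (t + r) := by
  simp only [futureMean, add_right_comm]

theorem pastMean_comp_add (a : ℝ) (g : ℝ → ℝ) (r t : ℝ) :
    pastMean a (fun x => g (x + r)) t = pastMean a g (t + r) := by
  simp only [pastMean, sub_add_eq_add_sub]

theorem monotone_pastMean (ha : 0 < a) (hg : IsDensity C g) (hmono : Monotone g) :
    Monotone (pastMean a g) := fun t r htr =>
  laplaceIntegral_mono ha (hg.comp (measurable_id.const_sub t))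
    (hg.comp (measurable_id.const_sub r))
    fun u => hmono (sub_le_sub_right htr u)

theorem pastMean_eq_futureMean_neg (a : ℝ) (g : ℝ → ℝ) (t : ℝ) :
    pastMean a g t = futureMean a (fun u => g (-u)) (-t) := by
  simp only [pastMean, futureMean, neg_add, neg_neg, sub_eq_add_neg]

end LaplaceIntegral

namespace IsDensity

variable {a C : ℝ} {g : ℝ → ℝ}

theorem exp_mul_futureMean_le (hg : IsDensity C g) (ha : 0 < a) {r : ℝ} (hr : 0 ≤ r) (t : ℝ) :
    exp (-(a * r)) * futureMean a g (t + r) ≤ futureMean a g t := by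
  have hexp : exp (-(a * r)) * exp (a * (t + r)) = exp (a * t) := by
    rw [← Real.exp_add]
    congr 1
    ring
  rw [futureMean_eq_exp_mul_integral_Ioi, futureMean_eq_exp_mul_integral_Ioi, ← mul_assoc, hexp]
  refine mul_le_mul_of_nonneg_left ?_ (Real.exp_pos _).le
  exact setIntegral_mono_set (hg.integrableOn ha t)
    (Eventually.of_forall fun u => mul_nonneg (Real.exp_pos _).le (hg.nonneg u))
    (Ioi_subset_Ioi (le_add_of_nonneg_right hr)).eventuallyLE

theorem exp_mul_pastMean_le (hg : IsDensity C g) (ha : 0 < a) {r : ℝ} (hr : 0 ≤ r) (t : ℝ) :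
    exp (-(a * r)) * pastMean a g (t - r) ≤ pastMean a g t := by
  simpa only [pastMean_eq_futureMean_neg, neg_sub', sub_neg_eq_add] using
    (hg.comp measurable_neg).exp_mul_futureMean_le ha hr (-t)

theorem integral_Ioi_eq_sub (hg : IsDensity C g) (ha : 0 < a) (t : ℝ) :
    ∫ r in Ioi t, exp (-a * r) * g r =
      (∫ r in Ioi 0, exp (-a * r) * g r) - ∫ r in (0 : ℝ)..t, exp (-a * r) * g r := by
  rw [← intervalIntegral.integral_interval_add_Ioi (hg.integrableOn ha 0) (hg.integrableOn ha t)]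
  ring

theorem continuous_futureMean (hg : IsDensity C g) (ha : 0 < a) : Continuous (futureMean a g) := by
  have hint (x y : ℝ) : IntervalIntegrable (fun r => exp (-a * r) * g r) volume x y :=
    intervalIntegrable_iff.2 ((hg.integrableOn ha (min x y)).mono_set fun _ hr => hr.1)
  have hprimitive := intervalIntegral.continuous_primitive hint 0
  rw [funext (futureMean_eq_exp_mul_integral_Ioi a g)]
  exact (by fun_prop : Continuous fun t => exp (a * t)).mul
    (by rw [funext (hg.integral_Ioi_eq_sub ha)]; exact continuous_const.sub hprimitive)

theorem continuous_pastMean (hg : IsDensity C g) (ha : 0 < a) : Continuous (pastMean a g) := by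
  rw [funext (pastMean_eq_futureMean_neg a g)]
  exact ((hg.comp measurable_neg).continuous_futureMean ha).comp continuous_neg

protected theorem futureMean (hg : IsDensity C g) (ha : 0 < a) :
    IsDensity (C / a) (futureMean a g) where
  measurable := (hg.continuous_futureMean ha).measurable
  nonneg t := laplaceIntegral_nonneg a fun u => hg.nonneg (t + u)
  le t := (laplaceIntegral_mono ha (hg.comp (measurable_const_add t))
    (const ((hg.nonneg 0).trans (hg.le 0)) le_rfl) fun u => hg.le (t + u)).trans_eq
      (laplaceIntegral_const ha C)

protected theorem pastMean (hg : IsDensity C g) (ha : 0 < a) :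
    IsDensity (C / a) (pastMean a g) := by
  rw [funext (pastMean_eq_futureMean_neg a g)]
  exact ((hg.comp measurable_neg).futureMean ha).comp measurable_neg

theorem hasDerivAt_futureMean (hg : IsDensity C g) (ha : 0 < a) (hcont : Continuous g) (t : ℝ) :
    HasDerivAt (futureMean a g) (a * futureMean a g t - g t) t := by
  have hprimitive : HasDerivAt (fun t => ∫ r in (0 : ℝ)..t, exp (-a * r) * g r)
      (exp (-a * t) * g t) t :=
    (show Continuous fun r => exp (-a * r) * g r by fun_prop).integral_hasStrictDerivAt 0 t
      |>.hasDerivAt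
  have htail : HasDerivAt (fun t => ∫ r in Ioi t, exp (-a * r) * g r)
      (-(exp (-a * t) * g t)) t := by
    rw [funext (hg.integral_Ioi_eq_sub ha)]
    exact hprimitive.const_sub _
  have hexp : HasDerivAt (fun t => exp (a * t)) (exp (a * t) * (a * 1)) t :=
    ((hasDerivAt_id t).const_mul a).exp
  rw [funext (futureMean_eq_exp_mul_integral_Ioi a g)]
  refine (hexp.mul htail).congr_deriv ?_
  have hcancel : exp (a * t) * exp (-a * t) = 1 := by rw [← Real.exp_add]; simp
  linear_combination -g t * hcancel

theorem hasDerivAt_pastMean (hg : IsDensity C g) (ha : 0 < a) (hcont : Continuous g) (t : ℝ) :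
    HasDerivAt (pastMean a g) (g t - a * pastMean a g t) t := by
  have hfuture := (hg.comp measurable_neg).hasDerivAt_futureMean ha (hcont.comp continuous_neg) (-t)
  rw [funext (pastMean_eq_futureMean_neg a g)]
  refine (hfuture.comp t (hasDerivAt_neg t)).congr_deriv ?_
  rw [neg_neg]
  ring

theorem futureMean_le_of_hasDerivAt (hg : IsDensity C g) (ha : 0 < a) (hcont : Continuous g)
    {x x' : ℝ → ℝ} {T : ℝ} (hx : ∀ t ≤ T, HasDerivAt x (x' t) t)
    (hle : ∀ t ≤ T, g t ≤ a * x t - x' t) (hT : futureMean a g T ≤ x T) {t : ℝ} (ht : t ≤ T) :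
    futureMean a g t ≤ x t := by
  have hnonneg := nonneg_of_hasDerivAt_le_mul (a := a) (f := fun r => x r - futureMean a g r) ht
    (fun r hr => (hx r hr.2).sub (hg.hasDerivAt_futureMean ha hcont r))
    (fun r hr => by linarith [hle r hr.2]) (sub_nonneg.2 hT)
  exact sub_nonneg.1 hnonneg

theorem le_futureMean_of_hasDerivAt (hg : IsDensity C g) (ha : 0 < a) (hcont : Continuous g)
    {x x' : ℝ → ℝ} {T : ℝ} (hx : ∀ t ≤ T, HasDerivAt x (x' t) t)
    (hle : ∀ t ≤ T, a * x t - x' t ≤ g t) (hT : x T ≤ futureMean a g T) {t : ℝ} (ht : t ≤ T) :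
    x t ≤ futureMean a g t := by
  have hnonneg := nonneg_of_hasDerivAt_le_mul (a := a) (f := fun r => futureMean a g r - x r) ht
    (fun r hr => (hg.hasDerivAt_futureMean ha hcont r).sub (hx r hr.2))
    (fun r hr => by linarith [hle r hr.2]) (sub_nonneg.2 hT)
  exact sub_nonneg.1 hnonneg

end IsDensity

/-! ### The fixed-point operator -/

/-- The source term of the profile equation: if `η = φ' + s φ`, so that `φ = pastMean s η`, then
`φ` solves the profile equation exactly when `x = neutralPart b h η` solves
`x' = (c + s) x - frontSource b c h k s η`. -/
noncomputable def frontSource (b c h k s : ℝ) (η : ℝ → ℝ) (t : ℝ) : ℝ :=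
  (s ^ 2 + c * s) * neutralPart b h (pastMean s η) t + k * delayedLogistic h (pastMean s η) t

/-- The operator whose monotone fixed points `η` yield the profiles `pastMean s η`. -/
noncomputable def frontStep (b c h k s : ℝ) (η : ℝ → ℝ) (t : ℝ) : ℝ :=
  b * η (t - h) + futureMean (c + s) (frontSource b c h k s η) t

theorem frontStep_comp_add (b c h k s : ℝ) (η : ℝ → ℝ) (r t : ℝ) :
    frontStep b c h k s (fun x => η (x + r)) t = frontStep b c h k s η (t + r) := by
  have hsource : frontSource b c h k s (fun x => η (x + r)) =
      fun x => frontSource b c h k s η (x + r) := by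
    funext x
    simp only [frontSource, neutralPart, delayedLogistic, pastMean_comp_add, sub_add_eq_add_sub]
  rw [frontStep, hsource, futureMean_comp_add, sub_add_eq_add_sub, frontStep]

/-- `-s` is a root of the characteristic function at the upper equilibrium, for the reaction term
with coefficient `k`. For such `s` the operator `frontStep b c h k s` is monotone. -/
structure IsDecayRate (b c h k s : ℝ) : Prop where
  b_nonneg : 0 ≤ b
  c_nonneg : 0 ≤ c
  h_nonneg : 0 ≤ h
  k_nonneg : 0 ≤ k
  s_pos : 0 < s
  decaySymbol_eq : decaySymbol b c h s = k

namespace IsDensity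

variable {s : ℝ} {η : ℝ → ℝ}

theorem pastMean_nonneg (hη : IsDensity s η) (hs : 0 < s) (t : ℝ) : 0 ≤ pastMean s η t :=
  (hη.pastMean hs).nonneg t

theorem pastMean_le_one (hη : IsDensity s η) (hs : 0 < s) (t : ℝ) : pastMean s η t ≤ 1 :=
  ((hη.pastMean hs).le t).trans_eq (div_self hs.ne')

theorem continuous_frontSource (hη : IsDensity s η) (hs : 0 < s) (b c h k : ℝ) :
    Continuous (frontSource b c h k s η) := by
  have := hη.continuous_pastMean hs
  unfold frontSource neutralPart delayedLogistic
  fun_prop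

end IsDensity

namespace IsDecayRate

variable {b c h k s : ℝ} {η ξ : ℝ → ℝ}

theorem speed_add_pos (H : IsDecayRate b c h k s) : 0 < c + s :=
  add_pos_of_nonneg_of_pos H.c_nonneg H.s_pos

-- The decay of a past mean over the delay is exactly compensated by `decaySymbol b c h s = k`.
theorem mul_pastMean_sub_le (H : IsDecayRate b c h k s) (hη : IsDensity s η) (t : ℝ) :
    k * pastMean s η (t - h) ≤ (s ^ 2 + c * s) * neutralPart b h (pastMean s η) t := by
  have hrate : 0 ≤ s ^ 2 + c * s :=
    add_nonneg (sq_nonneg s) (mul_nonneg H.c_nonneg H.s_pos.le)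
  have hdecay := mul_le_mul_of_nonneg_left (hη.exp_mul_pastMean_le H.s_pos H.h_nonneg t) hrate
  rw [← H.decaySymbol_eq, decaySymbol, neutralPart]
  linarith

theorem frontSource_mono (H : IsDecayRate b c h k s) (hη : IsDensity s η) (hξ : IsDensity s ξ)
    (hle : η ≤ ξ) : frontSource b c h k s η ≤ frontSource b c h k s ξ := by
  intro t
  have hlinear := H.mul_pastMean_sub_le (hξ.sub hη hle) t
  have hmono := pastMean_mono H.s_pos hη hξ hle
  have hnow := mul_nonneg H.k_nonneg (mul_nonneg (sub_nonneg.2 (hmono t))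
    (sub_nonneg.2 (hη.pastMean_le_one H.s_pos (t - h))))
  have hdelayed := mul_nonneg H.k_nonneg (mul_nonneg (sub_nonneg.2 (hmono (t - h)))
    (sub_nonneg.2 (hξ.pastMean_le_one H.s_pos t)))
  rw [pastMean_sub H.s_pos hξ hη] at hlinear
  simp only [neutralPart, Pi.sub_apply] at hlinear
  simp only [frontSource, neutralPart, delayedLogistic]
  linarith

theorem isDensity_frontSource (H : IsDecayRate b c h k s) (hη : IsDensity s η) :
    IsDensity ((s ^ 2 + c * s) * (1 - b)) (frontSource b c h k s η) where
  measurable := (hη.continuous_frontSource H.s_pos b c h k).measurable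
  nonneg t := by
    have hle := H.frontSource_mono (IsDensity.const le_rfl H.s_pos.le) hη hη.nonneg t
    simpa [frontSource, neutralPart, delayedLogistic, pastMean, laplaceIntegral_const H.s_pos]
      using hle
  le t := by
    have hle := H.frontSource_mono hη (IsDensity.const H.s_pos.le le_rfl) hη.le t
    simpa [frontSource, neutralPart, delayedLogistic, pastMean, laplaceIntegral_const H.s_pos,
      H.s_pos.ne'] using hle

theorem frontStep_mono (H : IsDecayRate b c h k s) (hη : IsDensity s η) (hξ : IsDensity s ξ)
    (hle : η ≤ ξ) : frontStep b c h k s η ≤ frontStep b c h k s ξ := fun t =>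
  add_le_add (mul_le_mul_of_nonneg_left (hle (t - h)) H.b_nonneg)
    (futureMean_mono H.speed_add_pos (H.isDensity_frontSource hη) (H.isDensity_frontSource hξ)
      (H.frontSource_mono hη hξ hle) t)

theorem isDensity_futureMean_frontSource (H : IsDecayRate b c h k s) (hη : IsDensity s η) :
    IsDensity (s * (1 - b)) (futureMean (c + s) (frontSource b c h k s η)) := by
  have hbound : (s ^ 2 + c * s) * (1 - b) / (c + s) = s * (1 - b) := by
    have := H.speed_add_pos.ne'
    field_simp
    ring
  exact hbound ▸ (H.isDensity_frontSource hη).futureMean H.speed_add_pos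

theorem isDensity_frontStep (H : IsDecayRate b c h k s) (hη : IsDensity s η) :
    IsDensity s (frontStep b c h k s η) where
  measurable := ((hη.comp (measurable_id.sub_const h)).measurable.const_mul b).add
    (H.isDensity_futureMean_frontSource hη).measurable
  nonneg t := add_nonneg (mul_nonneg H.b_nonneg (hη.nonneg (t - h)))
    ((H.isDensity_futureMean_frontSource hη).nonneg t)
  le t := by
    have hdelayed := mul_le_mul_of_nonneg_left (hη.le (t - h)) H.b_nonneg
    have hmean := (H.isDensity_futureMean_frontSource hη).le t
    rw [frontStep]
    linarith

theorem monotone_frontStep (H : IsDecayRate b c h k s) (hη : IsDensity s η) (hm : Monotone η) :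
    Monotone (frontStep b c h k s η) := by
  intro t r htr
  have hshift := H.frontStep_mono hη (hη.comp (measurable_id.add_const (r - t)))
    (fun x => hm (le_add_of_nonneg_right (sub_nonneg.2 htr))) t
  simpa only [id_eq, frontStep_comp_add, add_sub_cancel] using hshift

theorem isProfile_of_frontStep_eq (H : IsDecayRate b c h k s) (hη : IsDensity s η)
    (hm : Monotone η) (hfix : frontStep b c h k s η = η) :
    IsProfile b c h k (pastMean s η)
      fun t => neutralPart b h η t - s * neutralPart b h (pastMean s η) t := by
  have hneutral : neutralPart b h η = futureMean (c + s) (frontSource b c h k s η) := by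
    funext t
    rw [neutralPart, sub_eq_iff_eq_add', ← congrFun hfix t, frontStep]
  have hdensity : IsDensity (s * (1 - b)) (neutralPart b h η) :=
    hneutral ▸ H.isDensity_futureMean_frontSource hη
  have hderiv (t : ℝ) : HasDerivAt (neutralPart b h η)
      ((c + s) * neutralPart b h η t - frontSource b c h k s η t) t :=
    hneutral ▸ (H.isDensity_frontSource hη).hasDerivAt_futureMean H.speed_add_pos
      (hη.continuous_frontSource H.s_pos b c h k) t
  have hderivPast (t : ℝ) : HasDerivAt (neutralPart b h (pastMean s η))
      (neutralPart b h η t - s * neutralPart b h (pastMean s η) t) t :=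
    pastMean_neutralPart H.s_pos hη b h ▸ hdensity.hasDerivAt_pastMean H.s_pos
      (continuous_iff_continuousAt.2 fun r => (hderiv r).continuousAt) t
  refine ⟨monotone_pastMean H.s_pos hη hm, hη.pastMean_nonneg H.s_pos, hη.pastMean_le_one H.s_pos,
    hderivPast, fun t => ((hderiv t).sub ((hderivPast t).const_mul s)).congr_deriv ?_⟩
  rw [frontSource]
  ring

end IsDecayRate

/-! ### Sub- and supersolutions -/

/-- The difference `A e^{l t} - B e^{m t}` of exponentials. -/
noncomputable def expDiff (A l B m t : ℝ) : ℝ := A * exp (l * t) - B * exp (m * t)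

section ExpDiff

variable {A l B m s T t : ℝ} {η : ℝ → ℝ}

theorem exp_mul_sub (l t h : ℝ) : exp (l * (t - h)) = exp (-(l * h)) * exp (l * t) := by
  rw [← Real.exp_add]
  congr 1
  ring

theorem neutralPart_expDiff (b h A l B m t : ℝ) :
    neutralPart b h (expDiff A l B m) t =
      expDiff (A * (1 - b * exp (-(l * h)))) l (B * (1 - b * exp (-(m * h)))) m t := by
  simp only [neutralPart, expDiff, exp_mul_sub]
  ring

theorem hasDerivAt_expDiff (A l B m t : ℝ) :
    HasDerivAt (expDiff A l B m) (expDiff (A * l) l (B * m) m t) t := by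
  have hexp (A l : ℝ) : HasDerivAt (fun t => A * exp (l * t)) (A * l * exp (l * t)) t :=
    (((hasDerivAt_id t).const_mul l).exp.const_mul A).congr_deriv (by simp only [id_eq]; ring)
  exact (hexp A l).sub (hexp B m)

theorem hasDerivAt_neutralPart_expDiff (b h A l B m t : ℝ) :
    HasDerivAt (neutralPart b h (expDiff A l B m))
      (neutralPart b h (expDiff (A * l) l (B * m) m) t) t :=
  (hasDerivAt_expDiff A l B m t).sub
    (((hasDerivAt_expDiff A l B m (t - h)).comp_sub_const t h).const_mul b)

theorem pastMean_eq_expDiff (hl : 0 < s + l) (hm : 0 < s + m)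
    (hη : EqOn η (expDiff A l B m) (Iic T)) (ht : t ≤ T) :
    pastMean s η t = expDiff (A / (s + l)) l (B / (s + m)) m t := by
  have hcongr : pastMean s η t = laplaceIntegral s fun u =>
      A * exp (l * t) * exp (-l * u) - B * exp (m * t) * exp (-m * u) :=
    laplaceIntegral_congr fun u hu => by
      rw [hη (show t - u ≤ T by linarith [mem_Ioi.1 hu]), expDiff, exp_mul_sub, exp_mul_sub]
      ring_nf
  rw [hcongr, laplaceIntegral_exp_sub_exp hl hm, expDiff]
  ring

theorem neutralPart_congr_Iic {b h : ℝ} {ξ : ℝ → ℝ} (hh : 0 ≤ h) (hη : EqOn η ξ (Iic T))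
    (ht : t ≤ T) : neutralPart b h η t = neutralPart b h ξ t := by
  rw [neutralPart, neutralPart, hη ht, hη (show t - h ≤ T by linarith)]

theorem frontSource_eq_of_eqOn_expDiff {b c h k : ℝ} (hh : 0 ≤ h) (hl : 0 < s + l) (hm : 0 < s + m)
    (hη : EqOn η (expDiff A l B m) (Iic T)) (ht : t ≤ T) :
    frontSource b c h k s η t =
      (c + s) * neutralPart b h (expDiff A l B m) t -
        neutralPart b h (expDiff (A * l) l (B * m) m) t -
        expDiff (A / (s + l) * (growthSymbol b c h l - k)) l
          (B / (s + m) * (growthSymbol b c h m - k)) m t -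
        k * (pastMean s η t * pastMean s η (t - h)) := by
  have hpast : EqOn (pastMean s η) (expDiff (A / (s + l)) l (B / (s + m)) m) (Iic T) :=
    fun r hr => pastMean_eq_expDiff hl hm hη hr
  have hsplit : frontSource b c h k s η t =
      (s ^ 2 + c * s) * neutralPart b h (pastMean s η) t + k * pastMean s η t -
        k * (pastMean s η t * pastMean s η (t - h)) := by
    rw [frontSource, delayedLogistic]
    ring
  rw [hsplit, neutralPart_congr_Iic hh hpast ht, hpast ht]
  simp only [neutralPart_expDiff, expDiff, growthSymbol]
  have := hl.ne'
  have := hm.ne'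
  field_simp
  ring

end ExpDiff

namespace IsDecayRate

variable {b c h k s T t : ℝ} {η x x' : ℝ → ℝ}

theorem frontStep_le (H : IsDecayRate b c h k s) (hη : IsDensity s η)
    (hx : ∀ t ≤ T, HasDerivAt x (x' t) t) (hneutral : EqOn (neutralPart b h η) x (Iic T))
    (hle : ∀ t ≤ T, frontSource b c h k s η t ≤ (c + s) * x t - x' t)
    (hT : frontStep b c h k s η T ≤ η T) (ht : t ≤ T) : frontStep b c h k s η t ≤ η t := by
  have hequiv {r : ℝ} (hr : r ≤ T) : frontStep b c h k s η r ≤ η r ↔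
      futureMean (c + s) (frontSource b c h k s η) r ≤ x r := by
    rw [← hneutral hr, neutralPart, le_sub_iff_add_le', frontStep]
  exact (hequiv ht).2 ((H.isDensity_frontSource hη).futureMean_le_of_hasDerivAt H.speed_add_pos
    (hη.continuous_frontSource H.s_pos b c h k) hx hle ((hequiv le_rfl).1 hT) ht)

theorem le_frontStep (H : IsDecayRate b c h k s) (hη : IsDensity s η)
    (hx : ∀ t ≤ T, HasDerivAt x (x' t) t) (hneutral : EqOn (neutralPart b h η) x (Iic T))
    (hle : ∀ t ≤ T, (c + s) * x t - x' t ≤ frontSource b c h k s η t)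
    (hT : η T ≤ frontStep b c h k s η T) (ht : t ≤ T) : η t ≤ frontStep b c h k s η t := by
  have hequiv {r : ℝ} (hr : r ≤ T) : η r ≤ frontStep b c h k s η r ↔
      x r ≤ futureMean (c + s) (frontSource b c h k s η) r := by
    rw [← hneutral hr, neutralPart, sub_le_iff_le_add', frontStep]
  exact (hequiv ht).2 ((H.isDensity_frontSource hη).le_futureMean_of_hasDerivAt H.speed_add_pos
    (hη.continuous_frontSource H.s_pos b c h k) hx hle ((hequiv le_rfl).1 hT) ht)

end IsDecayRate

/-- The supersolution of the fixed-point problem, for a growth exponent `l`. -/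
noncomputable def upperBarrier (s l t : ℝ) : ℝ := s * exp (l * min t 0)

/-- The subsolution of the fixed-point problem, for exponents `l < m` and `N` large. -/
noncomputable def lowerBarrier (s l N m t : ℝ) : ℝ := max 0 (expDiff s l N m t)

section Barriers

variable {s l N m : ℝ}

theorem monotone_upperBarrier (hs : 0 ≤ s) (hl : 0 ≤ l) : Monotone (upperBarrier s l) := by
  intro t r htr
  unfold upperBarrier
  gcongr

theorem isDensity_upperBarrier (hs : 0 ≤ s) (hl : 0 ≤ l) : IsDensity s (upperBarrier s l) where
  measurable := (monotone_upperBarrier hs hl).measurable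
  nonneg _ := mul_nonneg hs (Real.exp_pos _).le
  le t := mul_le_of_le_one_right hs
    (Real.exp_le_one_iff.2 (mul_nonpos_of_nonneg_of_nonpos hl (min_le_right t 0)))

theorem eqOn_upperBarrier (s l : ℝ) : EqOn (upperBarrier s l) (expDiff s l 0 l) (Iic 0) := by
  intro t ht
  rw [upperBarrier, min_eq_left ht, expDiff, zero_mul, sub_zero]

theorem lowerBarrier_le_upperBarrier (hs : 0 ≤ s) (hsN : s ≤ N) (hlm : l ≤ m) :
    lowerBarrier s l N m ≤ upperBarrier s l := by
  intro t
  refine max_le (mul_nonneg hs (Real.exp_pos _).le) ?_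
  rcases le_total t 0 with ht | ht
  · rw [upperBarrier, min_eq_left ht]
    exact sub_le_self _ (mul_nonneg (hs.trans hsN) (Real.exp_pos _).le)
  · have hle : s * exp (l * t) ≤ N * exp (m * t) := by
      have := hs.trans hsN
      gcongr
    exact (sub_nonpos.2 hle).trans (mul_nonneg hs (Real.exp_pos _).le)

theorem isDensity_lowerBarrier (hs : 0 ≤ s) (hsN : s ≤ N) (hl : 0 ≤ l) (hlm : l ≤ m) :
    IsDensity s (lowerBarrier s l N m) where
  measurable := by unfold lowerBarrier expDiff; fun_prop
  nonneg t := le_max_left 0 _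
  le t := (lowerBarrier_le_upperBarrier hs hsN hlm t).trans ((isDensity_upperBarrier hs hl).le t)

theorem eqOn_lowerBarrier {T : ℝ} (hT : ∀ t ≤ T, 0 ≤ expDiff s l N m t) :
    EqOn (lowerBarrier s l N m) (expDiff s l N m) (Iic T) :=
  fun t ht => max_eq_right (hT t ht)

theorem exists_expDiff_sign_change (hs : 0 < s) (hsN : s ≤ N) (hlm : l < m) :
    ∃ T ≤ 0, (∀ t ≤ T, 0 ≤ expDiff s l N m t) ∧ ∀ t ≥ T, expDiff s l N m t ≤ 0 := by
  have hN : 0 < N := hs.trans_le hsN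
  have hsplit (t : ℝ) : expDiff s l N m t = exp (l * t) * (s - N * exp ((m - l) * t)) := by
    have hexp : exp (m * t) = exp (l * t) * exp ((m - l) * t) := by
      rw [← Real.exp_add]
      congr 1
      ring
    rw [expDiff, hexp]
    ring
  have hcross : N * exp ((m - l) * (Real.log (s / N) / (m - l))) = s := by
    rw [mul_div_cancel₀ _ (sub_pos.2 hlm).ne', Real.exp_log (div_pos hs hN),
      mul_div_cancel₀ _ hN.ne']
  refine ⟨Real.log (s / N) / (m - l), div_nonpos_of_nonpos_of_nonneg
    (Real.log_nonpos (div_pos hs hN).le ((div_le_one hN).2 hsN)) (sub_pos.2 hlm).le,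
    fun t ht => ?_, fun t ht => ?_⟩ <;> rw [hsplit]
  · refine mul_nonneg (Real.exp_pos _).le (sub_nonneg.2 (le_of_le_of_eq ?_ hcross))
    gcongr
  · refine mul_nonpos_of_nonneg_of_nonpos (Real.exp_pos _).le (sub_nonpos.2 (hcross.ge.trans ?_))
    gcongr

theorem pastMean_upperBarrier_lt_one (hs : 0 < s) (hl : 0 < l) {t : ℝ} (ht : t ≤ 0) :
    pastMean s (upperBarrier s l) t < 1 := by
  have hsl := add_pos hs hl
  rw [pastMean_eq_expDiff hsl hsl (eqOn_upperBarrier s l) ht, expDiff, zero_div, zero_mul, sub_zero]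
  exact mul_lt_one_of_nonneg_of_lt_one_left (div_pos hs hsl).le
    ((div_lt_one hsl).2 (lt_add_of_pos_right s hl))
    (Real.exp_le_one_iff.2 (mul_nonpos_of_nonneg_of_nonpos hl.le ht))

theorem pastMean_lowerBarrier_le (hs : 0 < s) (hN : 0 ≤ N) (hl : 0 ≤ l) (hlm : l ≤ m) {T : ℝ}
    (hT : ∀ t ≤ T, 0 ≤ expDiff s l N m t) {t : ℝ} (ht : t ≤ T) :
    pastMean s (lowerBarrier s l N m) t ≤ s / (s + l) * exp (l * t) := by
  have hsl := add_pos_of_pos_of_nonneg hs hl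
  have hsm := add_pos_of_pos_of_nonneg hs (hl.trans hlm)
  rw [pastMean_eq_expDiff hsl hsm (eqOn_lowerBarrier hT) ht]
  exact sub_le_self _ (mul_nonneg (div_nonneg hN hsm.le) (Real.exp_pos _).le)

theorem pastMean_lowerBarrier_pos (hs : 0 < s) (hl : 0 ≤ l) (hlm : l < m) {T : ℝ}
    (hT : ∀ t ≤ T, 0 ≤ expDiff s l N m t) : 0 < pastMean s (lowerBarrier s l N m) T := by
  have hsl := add_pos_of_pos_of_nonneg hs hl
  have hsm := add_pos_of_pos_of_nonneg hs (hl.trans hlm.le)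
  rw [pastMean_eq_expDiff hsl hsm (eqOn_lowerBarrier hT) le_rfl, expDiff, sub_pos]
  calc N / (s + m) * exp (m * T) = N * exp (m * T) / (s + m) := div_mul_eq_mul_div ..
    _ ≤ s * exp (l * T) / (s + m) :=
        div_le_div_of_nonneg_right
          (sub_nonneg.1 (hT T le_rfl : 0 ≤ s * exp (l * T) - N * exp (m * T))) hsm.le
    _ < s * exp (l * T) / (s + l) :=
        div_lt_div_of_pos_left (mul_pos hs (Real.exp_pos _)) hsl (add_lt_add_right hlm s)
    _ = s / (s + l) * exp (l * T) := (div_mul_eq_mul_div ..).symm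

end Barriers

namespace IsDecayRate

variable {b c h k s l m N : ℝ}

theorem frontStep_upperBarrier_le (H : IsDecayRate b c h k s) (hl : 0 ≤ l)
    (hgrowth : k ≤ growthSymbol b c h l) :
    frontStep b c h k s (upperBarrier s l) ≤ upperBarrier s l := by
  intro t
  have hη := isDensity_upperBarrier H.s_pos.le hl
  have hsl := add_pos_of_pos_of_nonneg H.s_pos hl
  have hright {r : ℝ} (hr : 0 ≤ r) :
      frontStep b c h k s (upperBarrier s l) r ≤ upperBarrier s l r := by
    rw [upperBarrier, min_eq_right hr, mul_zero, Real.exp_zero, mul_one]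
    exact (H.isDensity_frontStep hη).le r
  rcases le_total 0 t with ht | ht
  · exact hright ht
  refine H.frontStep_le hη (fun r _ => hasDerivAt_neutralPart_expDiff b h s l 0 l r)
    (fun r hr => neutralPart_congr_Iic H.h_nonneg (eqOn_upperBarrier s l) hr) (fun r hr => ?_)
    (hright le_rfl) ht
  have hlinear : 0 ≤ s / (s + l) * (growthSymbol b c h l - k) * exp (l * r) :=
    mul_nonneg (mul_nonneg (div_pos H.s_pos hsl).le (sub_nonneg.2 hgrowth)) (Real.exp_pos _).le
  have hquadratic := mul_nonneg H.k_nonneg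
    (mul_nonneg (hη.pastMean_nonneg H.s_pos r) (hη.pastMean_nonneg H.s_pos (r - h)))
  rw [frontSource_eq_of_eqOn_expDiff H.h_nonneg hsl hsl (eqOn_upperBarrier s l) hr]
  simp only [expDiff, zero_div, zero_mul]
  linarith

-- `m ≤ 2 l` makes the quadratic reaction term negligible against `e^{m t}` at `-∞`.
theorem mul_pastMean_mul_pastMean_lowerBarrier_le (H : IsDecayRate b c h k s) (hl : 0 ≤ l)
    (hlm : l ≤ m) (hml : m ≤ 2 * l) (hsN : s ≤ N)
    (hN : k * (s / (s + l)) ^ 2 ≤ N / (s + m) * (growthSymbol b c h m - k)) {T : ℝ} (hT0 : T ≤ 0)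
    (hT : ∀ t ≤ T, 0 ≤ expDiff s l N m t) {t : ℝ} (ht : t ≤ T) :
    k * (pastMean s (lowerBarrier s l N m) t * pastMean s (lowerBarrier s l N m) (t - h)) ≤
      N / (s + m) * (growthSymbol b c h m - k) * exp (m * t) := by
  have hη := isDensity_lowerBarrier H.s_pos.le hsN hl hlm
  have hbound {r : ℝ} (hr : r ≤ T) :=
    pastMean_lowerBarrier_le H.s_pos (H.s_pos.le.trans hsN) hl hlm hT hr
  have hcoeff : 0 ≤ s / (s + l) := div_nonneg H.s_pos.le (add_nonneg H.s_pos.le hl)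
  have hth : t - h ≤ t := sub_le_self t H.h_nonneg
  have hdelayed : pastMean s (lowerBarrier s l N m) (t - h) ≤ s / (s + l) * exp (l * t) :=
    (hbound (hth.trans ht)).trans (by gcongr)
  calc k * (pastMean s (lowerBarrier s l N m) t * pastMean s (lowerBarrier s l N m) (t - h))
      ≤ k * (s / (s + l) * exp (l * t) * (s / (s + l) * exp (l * t))) :=
        mul_le_mul_of_nonneg_left (mul_le_mul (hbound ht) hdelayed
          (hη.pastMean_nonneg H.s_pos (t - h)) (mul_nonneg hcoeff (Real.exp_pos _).le)) H.k_nonneg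
    _ = k * (s / (s + l)) ^ 2 * exp (2 * l * t) := by
        rw [show 2 * l * t = l * t + l * t by ring, Real.exp_add]
        ring
    _ ≤ k * (s / (s + l)) ^ 2 * exp (m * t) := by
        refine mul_le_mul_of_nonneg_left (Real.exp_le_exp.2 ?_)
          (mul_nonneg H.k_nonneg (sq_nonneg _))
        exact mul_le_mul_of_nonpos_right hml (ht.trans hT0)
    _ ≤ _ := mul_le_mul_of_nonneg_right hN (Real.exp_pos _).le

theorem lowerBarrier_le_frontStep (H : IsDecayRate b c h k s) (hl : 0 ≤ l) (hlm : l < m)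
    (hml : m ≤ 2 * l) (hsN : s ≤ N) (hgrowth : growthSymbol b c h l ≤ k)
    (hN : k * (s / (s + l)) ^ 2 ≤ N / (s + m) * (growthSymbol b c h m - k)) :
    lowerBarrier s l N m ≤ frontStep b c h k s (lowerBarrier s l N m) := by
  intro t
  obtain ⟨T, hT0, hT, hT'⟩ := exists_expDiff_sign_change H.s_pos hsN hlm
  have hη := isDensity_lowerBarrier H.s_pos.le hsN hl hlm.le
  have hright {r : ℝ} (hr : T ≤ r) :
      lowerBarrier s l N m r ≤ frontStep b c h k s (lowerBarrier s l N m) r := by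
    rw [lowerBarrier, max_eq_left (hT' r hr)]
    exact (H.isDensity_frontStep hη).nonneg r
  rcases le_total T t with ht | ht
  · exact hright ht
  refine H.le_frontStep hη (fun r _ => hasDerivAt_neutralPart_expDiff b h s l N m r)
    (fun r hr => neutralPart_congr_Iic H.h_nonneg (eqOn_lowerBarrier hT) hr) (fun r hr => ?_)
    (hright le_rfl) ht
  have hsl := add_pos_of_pos_of_nonneg H.s_pos hl
  have hsm := add_pos_of_pos_of_nonneg H.s_pos (hl.trans hlm.le)
  have hlinear : s / (s + l) * (growthSymbol b c h l - k) * exp (l * r) ≤ 0 :=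
    mul_nonpos_of_nonpos_of_nonneg
      (mul_nonpos_of_nonneg_of_nonpos (div_pos H.s_pos hsl).le (sub_nonpos.2 hgrowth))
      (Real.exp_pos _).le
  have hquadratic :=
    H.mul_pastMean_mul_pastMean_lowerBarrier_le hl hlm.le hml hsN hN hT0 hT hr
  rw [frontSource_eq_of_eqOn_expDiff H.h_nonneg hsl hsm (eqOn_lowerBarrier hT) hr]
  simp only [expDiff]
  linarith

end IsDecayRate

/-! ### Existence of profiles -/

-- The Knaster-Tarski argument: the fixed point is the infimum of the points moved downwards.
theorem exists_fixedPoint_of_monotoneOn {α : Type*} [PartialOrder α] {P : Set α} {f : α → α}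
    {a x : α} (hInf : ∀ S ⊆ P, S.Nonempty → ∃ y ∈ P, IsGLB S y) (hmaps : MapsTo f P P)
    (hmono : MonotoneOn f P) (ha : ∀ y ∈ P, a ≤ y → a ≤ f y) (hx : x ∈ P) (hax : a ≤ x)
    (hfx : f x ≤ x) : ∃ y ∈ P, f y = y ∧ a ≤ y ∧ y ≤ x := by
  let S : Set α := {y ∈ P | a ≤ y ∧ f y ≤ y}
  obtain ⟨y, hy, hglb⟩ := hInf S (sep_subset P _) ⟨x, hx, hax, hfx⟩
  have hay : a ≤ y := hglb.2 fun z hz => hz.2.1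
  have hfy : f y ≤ y := hglb.2 fun z hz => (hmono hy hz.1 (hglb.1 hz)).trans hz.2.2
  have hyf : y ≤ f y := hglb.1 ⟨hmaps hy, ha y hy hay, hmono (hmaps hy) hy hfy⟩
  exact ⟨y, hy, hfy.antisymm hyf, hay, hglb.1 ⟨hx, hax, hfx⟩⟩

theorem exists_isGLB_of_monotone_isDensity {C : ℝ} {S : Set (ℝ → ℝ)}
    (hS : ∀ η ∈ S, IsDensity C η ∧ Monotone η) (hne : S.Nonempty) :
    ∃ ζ, (IsDensity C ζ ∧ Monotone ζ) ∧ IsGLB S ζ := by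
  have hglb : IsGLB S fun t => sInf (Function.eval t '' S) := isGLB_pi.2 fun t =>
    isGLB_csInf (hne.image _) ⟨0, forall_mem_image.2 fun η hη => (hS η hη).1.nonneg t⟩
  have hmono : Monotone fun t => sInf (Function.eval t '' S) := fun t r htr =>
    le_csInf (hne.image _) (forall_mem_image.2 fun η hη =>
      (hglb.1 hη t).trans ((hS η hη).2 htr))
  obtain ⟨η, hη⟩ := hne
  exact ⟨_, ⟨⟨hmono.measurable, hglb.2 fun ξ hξ t => (hS ξ hξ).1.nonneg t,
    fun t => (hglb.1 hη t).trans ((hS η hη).1.le t)⟩, hmono⟩, hglb⟩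

namespace IsDecayRate

variable {b c h k s : ℝ}

theorem exists_frontStep_eq (H : IsDecayRate b c h k s) {η ξ : ℝ → ℝ} (hη : IsDensity s η)
    (hξ : IsDensity s ξ) (hm : Monotone ξ) (hle : η ≤ ξ) (hsub : η ≤ frontStep b c h k s η)
    (hsuper : frontStep b c h k s ξ ≤ ξ) :
    ∃ ζ, (IsDensity s ζ ∧ Monotone ζ) ∧ frontStep b c h k s ζ = ζ ∧ η ≤ ζ ∧ ζ ≤ ξ :=
  exists_fixedPoint_of_monotoneOn (P := {ζ | IsDensity s ζ ∧ Monotone ζ})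
    (fun _ hS hne => exists_isGLB_of_monotone_isDensity hS hne)
    (fun _ hζ => ⟨H.isDensity_frontStep hζ.1, H.monotone_frontStep hζ.1 hζ.2⟩)
    (fun _ hζ _ hζ' => H.frontStep_mono hζ.1 hζ'.1)
    (fun _ hζ hηζ => hsub.trans (H.frontStep_mono hη hζ.1 hηζ)) ⟨hξ, hm⟩ hle hsuper

theorem exists_isProfile (H : IsDecayRate b c h k s) {l m : ℝ} (hl : 0 < l) (hlm : l < m)
    (hml : m ≤ 2 * l) (hgrowth : growthSymbol b c h l = k) (hk : k < growthSymbol b c h m) :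
    ∃ φ p, IsProfile b c h k φ p ∧ ∃ t, 0 < φ t ∧ φ t < 1 := by
  have hsm : 0 < s + m := add_pos H.s_pos (hl.trans hlm)
  let N := max s (k * (s / (s + l)) ^ 2 * (s + m) / (growthSymbol b c h m - k))
  have hsN : s ≤ N := le_max_left ..
  have hN : k * (s / (s + l)) ^ 2 ≤ N / (s + m) * (growthSymbol b c h m - k) := by
    rw [div_mul_eq_mul_div, le_div_iff₀ hsm, ← div_le_iff₀ (sub_pos.2 hk)]
    exact le_max_right ..
  have hlower := isDensity_lowerBarrier H.s_pos.le hsN hl.le hlm.le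
  have hupper := isDensity_upperBarrier H.s_pos.le hl.le
  obtain ⟨ζ, ⟨hζ, hmono⟩, hfix, hge, hle⟩ := H.exists_frontStep_eq hlower hupper
    (monotone_upperBarrier H.s_pos.le hl.le)
    (lowerBarrier_le_upperBarrier H.s_pos.le hsN hlm.le)
    (H.lowerBarrier_le_frontStep hl.le hlm hml hsN hgrowth.le hN)
    (H.frontStep_upperBarrier_le hl.le hgrowth.ge)
  obtain ⟨T, hT0, hT, -⟩ := exists_expDiff_sign_change H.s_pos hsN hlm
  exact ⟨_, _, H.isProfile_of_frontStep_eq hζ hmono hfix, T,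
    (pastMean_lowerBarrier_pos H.s_pos hl.le hlm hT).trans_le
      (pastMean_mono H.s_pos hlower hζ hge T),
    (pastMean_mono H.s_pos hζ hupper hle T).trans_lt
      (pastMean_upperBarrier_lt_one H.s_pos hl hT0)⟩

end IsDecayRate

theorem exists_growth_exponents {b c h k z : ℝ} (hk : 0 < k) (hz : 0 < z)
    (hgrowth : k < growthSymbol b c h z) :
    ∃ l m, 0 < l ∧ l < m ∧ m ≤ 2 * l ∧ growthSymbol b c h l = k ∧ k < growthSymbol b c h m := by
  have hcont := continuous_growthSymbol b c h
  obtain ⟨l, ⟨hl, hle⟩, hmax⟩ := (isCompact_Icc.inter_right (isClosed_le hcont continuous_const) :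
    IsCompact (Icc 0 z ∩ {x | growthSymbol b c h x ≤ k})).exists_isGreatest
    ⟨0, left_mem_Icc.2 hz.le, (growthSymbol_zero b c h).trans_le hk.le⟩
  have hgt {x : ℝ} (hx : x ∈ Ioc l z) : k < growthSymbol b c h x := by
    by_contra! hxk
    exact hx.1.not_ge (hmax ⟨⟨hl.1.trans hx.1.le, hx.2⟩, hxk⟩)
  have hlz : l < z := hl.2.lt_of_ne fun heq => hgrowth.not_ge (heq ▸ hle)
  have hlk : growthSymbol b c h l = k := by
    refine hle.antisymm (ge_of_tendsto (hcont.continuousWithinAt (s := Ioi l) (x := l)) ?_)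
    filter_upwards [Ioc_mem_nhdsGT hlz] with x hx using (hgt hx).le
  have hl0 : 0 < l := hl.1.lt_of_ne fun heq => by
    rw [← heq, growthSymbol_zero] at hlk
    exact hk.ne hlk
  have hlm : l < min (2 * l) z := lt_min (by linarith) hlz
  exact ⟨l, min (2 * l) z, hl0, hlm, min_le_left _ _, hlk, hgt ⟨hlm, min_le_right _ _⟩⟩

theorem IsProfile.exists_eq {b c h k a : ℝ} {φ p : ℝ → ℝ} (hφ : IsProfile b c h k φ p)
    (hcont : Continuous φ) (hk : 0 < k) {t : ℝ} (ht0 : 0 < φ t) (ht1 : φ t < 1) (ha0 : 0 < a)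
    (ha1 : a < 1) : ∃ r, φ r = a := by
  obtain ⟨hbot, htop⟩ := hφ.tendsto_zero_and_one hk ht0 ht1
  exact mem_range_of_exists_le_of_exists_ge hcont (hbot.eventually_le_const ha0).exists
    (htop.eventually_const_le ha1).exists

theorem exists_isProfile_of_lt {b c h k z r : ℝ} (hb0 : 0 ≤ b) (hb1 : b < 1) (hc : 0 < c)
    (hh : 0 ≤ h) (hk : 0 < k) (hz : 0 < z) (hgrowth : k < growthSymbol b c h z) (hr : 0 < r)
    (hdecay : k ≤ decaySymbol b c h r) :
    ∃ φ p, IsProfile b c h k φ p ∧ φ 0 = 1 / 2 := by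
  obtain ⟨l, m, hl, hlm, hml, hlk, hkm⟩ := exists_growth_exponents hk hz hgrowth
  obtain ⟨s, hs, hsk⟩ := intermediate_value_Ioc hr.le (continuous_decaySymbol b c h).continuousOn
    ⟨(decaySymbol_zero b c h).trans_lt hk, hdecay⟩
  have H : IsDecayRate b c h k s := ⟨hb0, hc.le, hh, hk.le, hs.1, hsk⟩
  obtain ⟨φ, p, hφ, t, ht0, ht1⟩ := H.exists_isProfile hl hlm hml hlk hkm
  obtain ⟨x, hx⟩ := hφ.exists_eq (hφ.continuous hb0 hb1 hh hk.le hc) hk ht0 ht1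
    (a := 1 / 2) one_half_pos one_half_lt_one
  exact ⟨_, _, hφ.comp_add x, by rwa [zero_add]⟩

theorem exists_isMonotoneFront {b c τ z r : ℝ} (hb0 : 0 ≤ b) (hb1 : b < 1) (hτ : 0 ≤ τ)
    (hc : 0 < c) (hz : 0 < z) (hgrowth : 1 ≤ growthSymbol b c (c * τ) z) (hr : 0 < r)
    (hdecay : 1 ≤ decaySymbol b c (c * τ) r) : ∃ φ, IsMonotoneFront b c τ φ := by
  have hh : 0 ≤ c * τ := mul_nonneg hc.le hτ
  obtain ⟨k, -, hk, hlim⟩ := exists_seq_strictMono_tendsto' (zero_lt_one (α := ℝ))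
  choose φ p hφ hhalf using fun n => exists_isProfile_of_lt hb0 hb1 hc hh (hk n).1 hz
    ((hk n).2.trans_le hgrowth) hr ((hk n).2.le.trans hdecay)
  obtain ⟨ψ, q, hψ, hψ0⟩ :=
    IsProfile.exists_tendsto hb0 hb1 hh hc (fun n => Ioo_subset_Icc_self (hk n)) hlim hφ hhalf
  obtain ⟨hbot, htop⟩ := hψ.tendsto_zero_and_one one_pos (s := 0)
    (hψ0 ▸ one_half_pos) (hψ0 ▸ one_half_lt_one)
  exact ⟨ψ, hψ.isMonotoneFront hb0 hb1 hh hc hbot htop⟩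

end NeutralKPP

/-- For `b ∈ [0,1)` and `τ > 0`, the neutral KPP-Fisher equation admits a
monotone traveling front with speed `c > 0` if and only if `(τ, c) ∈ 𝔇`. -/
theorem neutral_KPP_front_exists_iff (b τ c : ℝ) (hb0 : 0 ≤ b) (hb1 : b < 1)
    (hτ : 0 < τ) (hc : 0 < c) :
    (∃ φ : ℝ → ℝ, IsMonotoneFront b c τ φ) ↔ inD b τ c := by
  constructor
  · rintro ⟨φ, hφ⟩
    exact NeutralKPP.inD_of_isMonotoneFront hb0 hb1 hτ hc hφ
  · intro hD
    obtain ⟨⟨z, hz, hgrowth⟩, r, hr, hdecay⟩ := (NeutralKPP.inD_iff hb0 hb1 hc hτ).1 hD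
    exact NeutralKPP.exists_isMonotoneFront hb0 hb1 hτ.le hc hz hgrowth hr hdecay
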